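/- arXiv:2008.06719 — 2 statements merged into one kernel-verified Lean document; each statement's English description precedes it below -/
import Mathlib

section
/- Let P ⊆ ℝ^d be an unbounded, line-free polyhedral set. Then for every x ∈ ℝ^d, Σ_{k=0}^d (−1)^k Σ_{F ∈ F_k(P)} 1_{F − N_F(P)}(x) = 0. -/
open scoped RealInnerProductSpace Pointwise Classical
open Set

noncomputable section

abbrev E (d : ℕ) : Type := EuclideanSpace ℝ (Fin d)

variable {d : ℕ}

/-- Positive hull: all finite nonnegative combinations of elements of `A`. -/
def posHull (A : Set (E d)) : Set (E d) :=
  {x | ∃ (n : ℕ) (c : Fin n → ℝ) (v : Fin n → E d),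
    (∀ i, 0 ≤ c i) ∧ (∀ i, v i ∈ A) ∧ x = ∑ i, c i • v i}

/-- Dual (polar) cone. -/
def polarCone (C : Set (E d)) : Set (E d) := {z | ∀ y ∈ C, ⟪z, y⟫ ≤ 0}

/-- A polyhedral cone: finite intersection of linear closed half-spaces. -/
def IsPolyCone (C : Set (E d)) : Prop :=
  ∃ (m : ℕ) (y : Fin m → E d), C = {z | ∀ i, ⟪z, y i⟫ ≤ 0}

/-- A polyhedral set: finite intersection of closed half-spaces. -/
def IsPolyhedron (P : Set (E d)) : Prop :=
  ∃ (m : ℕ) (y : Fin m → E d) (c : Fin m → ℝ), P = {z | ∀ i, ⟪z, y i⟫ ≤ c i}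

/-- Faces of `P`: `P` itself, or intersections with supporting hyperplanes. -/
def IsFaceOf (P F : Set (E d)) : Prop :=
  F = P ∨ ∃ (y : E d) (c : ℝ), (∀ z ∈ P, ⟪y, z⟫ ≤ c) ∧ F = {z | z ∈ P ∧ ⟪y, z⟫ = c}

/-- Dimension of a set: dimension of its affine hull. -/
def sdim (F : Set (E d)) : ℕ := Module.finrank ℝ (affineSpan ℝ F).direction

/-- The `k`-dimensional (nonempty) faces of `P`. -/
def facesOfDim (P : Set (E d)) (k : ℕ) : Set (Set (E d)) :=
  {F | IsFaceOf P F ∧ F.Nonempty ∧ sdim F = k}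

/-- Tangent cone of `P` at a point `f₀`. -/
def tangentConeOf (P : Set (E d)) (f₀ : E d) : Set (E d) :=
  {u | ∃ δ : ℝ, 0 < δ ∧ f₀ + δ • u ∈ P}

/-- Normal cone of `P` at its face `F`: polar of the tangent cone at any
relative interior point of `F`. -/
def normalCone (P F : Set (E d)) : Set (E d) :=
  {z | ∀ f₀ ∈ intrinsicInterior ℝ F, ∀ u ∈ tangentConeOf P f₀, ⟪z, u⟫ ≤ 0}

/-- `y` is a nearest point of `P` to `x`. -/
def IsNearestPt (P : Set (E d)) (x y : E d) : Prop :=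
  y ∈ P ∧ ∀ z ∈ P, dist x y ≤ dist x z

/-- `dim(x,P) = k`: the metric projection of `x` onto `P` lies in the relative
interior of a `k`-dimensional face of `P`. -/
def projDimEq (P : Set (E d)) (x : E d) (k : ℕ) : Prop :=
  ∃ y F, IsNearestPt P x y ∧ IsFaceOf P F ∧ y ∈ intrinsicInterior ℝ F ∧ sdim F = k

def IsHyperplane (H : Set (E d)) : Prop :=
  ∃ (y : E d) (c : ℝ), y ≠ 0 ∧ H = {z | ⟪y, z⟫ = c}

def IsLinearHyperplane (H : Set (E d)) : Prop :=
  ∃ y : E d, y ≠ 0 ∧ H = {z | ⟪y, z⟫ = 0}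

/-- Closed chambers of the complement of the set `S`. -/
def IsChamberOfUnion (S P : Set (E d)) : Prop :=
  ∃ x : E d, x ∉ S ∧ P = closure (connectedComponentIn Sᶜ x)

/-- Closed chambers of the hyperplane arrangement `A`. -/
def IsChamber (A : Finset (Set (E d))) (P : Set (E d)) : Prop :=
  IsChamberOfUnion (⋃ H ∈ A, H) P

/-- Intersection of a finite subcollection of hyperplanes (`⊤` for `∅`). -/
def interSet (B : Finset (Set (E d))) : Set (E d) := ⋂ H ∈ B, H

/-- The unsigned coefficient `a_k` of the characteristic polynomial:
`χ_A(t) = Σ_k (-1)^(d-k) a_k t^k` via Whitney's formula. -/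
def charCoeff (A : Finset (Set (E d))) (k : ℕ) : ℤ :=
  (-1 : ℤ) ^ (d - k) *
    ∑ B ∈ A.powerset,
      if (interSet B).Nonempty ∧ sdim (interSet B) = k then (-1 : ℤ) ^ B.card else 0

/-! Write `P` as the solution set of finitely many linear inequalities. Its nonempty faces `F`
correspond to the sets `J` of inequalities that can be tight simultaneously, with
`dim F = d - rank J`, and `N_F(P)` is the cone generated by the normals in `J`. Up to sign, the sum
is therefore the number of ways to write `x = f - n` with `f` in a face and `n` in its normal cone,
counted with sign `(-1) ^ rank J`: a degree of the piecewise linear map `f + n ↦ f - n`, which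
exists on all of `ℝ^d` by the nearest point projection.

Like a degree, the sum is locally constant. Along a short segment starting at `x` it splits as a sum
over the points `f = n` of `P` with `x ∈ n - N(n)` of the same sums for the critical cones at these
points, that is, for the faces of the tangent cone at `n` cut out by the multipliers of `n - x`. So
it suffices that for a polyhedral cone the sum does not depend on the point. This goes by induction
on the number of inequalities: away from a certain subspace the critical cones have fewer
inequalities, and on that subspace every face contributes, so that the sum is the alternating sum of
Euler's relation, which vanishes unless the cone is a linear space.

If `P` has a recession direction `u` with `-u` not a recession direction, then some normal `v`
satisfies `⟪u, v⟫ < 0` and `⟪g, v⟫ ≤ 0` for all recession directions `g`. On the ray `x + t v` the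
sum is constant, and for large `t` no point of the ray is of the form `f - n`, hence it is zero. -/
open Filter Topology

section LinearSystems

variable {V : Type*} [NormedAddCommGroup V] [InnerProductSpace ℝ V] {ι : Type*}

/-- The set of solutions of a system of linear constraints: inequalities `⟪y i, z⟫ ≤ c i` for
`i ∈ A` and equations for `i ∈ B`. In practice `B ⊆ A`. -/
def solutionSet (y : ι → V) (c : ι → ℝ) (A B : Finset ι) : Set V :=
  {z | (∀ i ∈ A, ⟪y i, z⟫ ≤ c i) ∧ ∀ i ∈ B, ⟪y i, z⟫ = c i}

/-- The constraints of `A` that are tight at `z`. -/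
def activeSet (y : ι → V) (c : ι → ℝ) (A : Finset ι) (z : V) : Finset ι :=
  {i ∈ A | ⟪y i, z⟫ = c i}

/-- The solutions whose active set is exactly `J`. The nonempty ones are the relative interiors of
the nonempty faces of the solution set, which are therefore indexed by `activeSets`. -/
def stratum (y : ι → V) (c : ι → ℝ) (A B J : Finset ι) : Set V :=
  {z ∈ solutionSet y c A B | activeSet y c A z = J}

/-- The index sets that occur as active sets of solutions; they index the nonempty faces of the
solution set. -/
def activeSets (y : ι → V) (c : ι → ℝ) (A B : Finset ι) : Set (Finset ι) :=
  {J | (stratum y c A B J).Nonempty}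

variable {y : ι → V} {c : ι → ℝ} {A B J : Finset ι} {z : V} {i : ι}

theorem mem_activeSet : i ∈ activeSet y c A z ↔ i ∈ A ∧ ⟪y i, z⟫ = c i :=
  Finset.mem_filter

theorem activeSet_subset : activeSet y c A z ⊆ A :=
  Finset.filter_subset _ _

theorem subset_activeSet (hBA : B ⊆ A) (hz : z ∈ solutionSet y c A B) :
    B ⊆ activeSet y c A z :=
  fun i hi => mem_activeSet.2 ⟨hBA hi, hz.2 i hi⟩

theorem mem_solutionSet_activeSet (hz : z ∈ solutionSet y c A B) :
    z ∈ solutionSet y c A (activeSet y c A z) :=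
  ⟨hz.1, fun _ hi => (mem_activeSet.1 hi).2⟩

theorem activeSet_mem_activeSets (hz : z ∈ solutionSet y c A B) :
    activeSet y c A z ∈ activeSets y c A B :=
  ⟨z, hz, rfl⟩

theorem subset_of_mem_activeSets (hJ : J ∈ activeSets y c A B) : J ⊆ A :=
  hJ.elim fun _ hz => hz.2 ▸ activeSet_subset

theorem superset_of_mem_activeSets (hBA : B ⊆ A) (hJ : J ∈ activeSets y c A B) : B ⊆ J :=
  hJ.elim fun _ hz => hz.2 ▸ subset_activeSet hBA hz.1

theorem mem_stratum_iff (hBJ : B ⊆ J) (hJA : J ⊆ A) :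
    z ∈ stratum y c A B J ↔
      (∀ i ∈ J, ⟪y i, z⟫ = c i) ∧ ∀ i ∈ A, i ∉ J → ⟪y i, z⟫ < c i := by
  constructor
  · rintro ⟨⟨hle, -⟩, rfl⟩
    refine ⟨fun i hi => (mem_activeSet.1 hi).2, fun i hi hiJ => (hle i hi).lt_of_ne fun h => ?_⟩
    exact hiJ (mem_activeSet.2 ⟨hi, h⟩)
  · rintro ⟨heq, hlt⟩
    refine ⟨⟨fun i hi => ?_, fun i hi => heq i (hBJ hi)⟩, Finset.ext fun i => ?_⟩
    · by_cases hiJ : i ∈ J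
      exacts [(heq i hiJ).le, (hlt i hi hiJ).le]
    · rw [mem_activeSet]
      refine ⟨fun h => by_contra fun hiJ => (hlt i h.1 hiJ).ne h.2, fun h => ⟨hJA h, heq i h⟩⟩

theorem mem_orthogonal_span_image_iff :
    z ∈ (Submodule.span ℝ (y '' B))ᗮ ↔ ∀ i ∈ B, ⟪y i, z⟫ = 0 := by
  rw [← Submodule.span_singleton_le_iff_mem, ← Submodule.isOrtho_iff_le, Submodule.isOrtho_span]
  simp [real_inner_comm z]

theorem convex_solutionSet : Convex ℝ (solutionSet y c A B) := by
  have : solutionSet y c A B =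
      (⋂ i ∈ A, {z | innerₗ V (y i) z ≤ c i}) ∩ ⋂ i ∈ B, {z | innerₗ V (y i) z = c i} := by
    ext z
    simp [solutionSet]
  rw [this]
  exact (convex_iInter₂ fun i _ => convex_halfSpace_le (innerₗ V (y i)).isLinear _).inter
    (convex_iInter₂ fun i _ => convex_hyperplane (innerₗ V (y i)).isLinear _)

theorem isClosed_solutionSet : IsClosed (solutionSet y c A B) := by
  have : solutionSet y c A B =
      (⋂ i ∈ A, {z | ⟪y i, z⟫ ≤ c i}) ∩ ⋂ i ∈ B, {z | ⟪y i, z⟫ = c i} := by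
    ext z
    simp [solutionSet]
  rw [this]
  exact (isClosed_biInter fun i _ => isClosed_le (by fun_prop) continuous_const).inter
    (isClosed_biInter fun i _ => isClosed_eq (by fun_prop) continuous_const)

end LinearSystems

section Farkas

variable {V : Type*} [NormedAddCommGroup V] [InnerProductSpace ℝ V] {ι : Type*} [Fintype ι]

/-- `l` expresses `q` as a combination of the vectors `y j`, `j ∈ J`, whose coefficients are
nonnegative except possibly at the indices in `B`. -/
structure IsMultiplier (y : ι → V) (B J : Finset ι) (q : V) (l : ι → ℝ) : Prop where
  eq_zero : ∀ j ∉ J, l j = 0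
  nonneg : ∀ j ∉ B, 0 ≤ l j
  sum_eq : ∑ j, l j • y j = q

/-- The cone of combinations of the `y j`, `j ∈ J`, with coefficients that are nonnegative outside
`B`. For `J` an active set it is the normal cone of the solution set at the corresponding face. -/
def mixedCone (y : ι → V) (B J : Finset ι) : Set V :=
  {q | ∃ l, IsMultiplier y B J q l}

variable {y : ι → V} {B J : Finset ι} {q u x₀ : V} {l : ι → ℝ} {a : ι}

theorem IsMultiplier.inner_eq (h : IsMultiplier y B J q l) (u : V) :
    ⟪q, u⟫ = ∑ j, l j * ⟪y j, u⟫ := by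
  rw [← h.sum_eq, sum_inner]
  simp only [real_inner_smul_left]

theorem IsMultiplier.inner_nonpos (h : IsMultiplier y B J q l) (hu : u ∈ solutionSet y 0 J B) :
    ⟪q, u⟫ ≤ 0 := by
  rw [h.inner_eq]
  refine Finset.sum_nonpos fun j _ => ?_
  by_cases hJ : j ∈ J
  · by_cases hB : j ∈ B
    · simp [hu.2 j hB]
    · exact mul_nonpos_of_nonneg_of_nonpos (h.nonneg j hB) (hu.1 j hJ)
  · simp [h.eq_zero j hJ]

theorem mixedCone_mono {J' : Finset ι} (h : J ⊆ J') : mixedCone y B J ⊆ mixedCone y B J' :=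
  fun _ ⟨l, hl⟩ => ⟨l, fun j hj => hl.eq_zero j fun hjJ => hj (h hjJ), hl.nonneg, hl.sum_eq⟩

theorem exists_isMultiplier_of_mem_span (hq : q ∈ Submodule.span ℝ (y '' B)) :
    ∃ l, IsMultiplier y B B q l := by
  obtain ⟨l, hl, rfl⟩ := (Finsupp.mem_span_image_iff_linearCombination ℝ).1 hq
  have hl₀ : ∀ j ∉ B, l j = 0 := fun j hj =>
    Finsupp.notMem_support_iff.1 fun h => hj ((Finsupp.mem_supported ℝ l).1 hl h)
  exact ⟨l, hl₀, fun j hj => (hl₀ j hj).ge,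
    ((Finsupp.linearCombination_apply ℝ l).trans (Finsupp.sum_fintype _ _ (by simp))).symm⟩

/-- The projection along `y a` onto the hyperplane orthogonal to `x₀`. It reduces Farkas' lemma to a
system with one generator less. -/
def projAlong (y : ι → V) (a : ι) (x₀ w : V) : V :=
  w - (⟪w, x₀⟫ / ⟪y a, x₀⟫) • y a

omit [Fintype ι] in
theorem inner_projAlong (w u : V) :
    ⟪projAlong y a x₀ w, u⟫ = ⟪w, u - (⟪y a, u⟫ / ⟪y a, x₀⟫) • x₀⟫ := by
  simp only [projAlong, inner_sub_left, inner_sub_right, real_inner_smul_left,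
    real_inner_smul_right]
  ring

theorem IsMultiplier.of_projAlong (ha₀ : 0 < ⟪y a, x₀⟫) (hq : 0 ≤ ⟪q, x₀⟫)
    (hx₀ : x₀ ∈ solutionSet y 0 J B)
    (h : IsMultiplier (fun j => projAlong y a x₀ (y j)) B J (projAlong y a x₀ q) l) :
    ∃ l', IsMultiplier y B (insert a J) q l' := by
  set p := ∑ j, l j • y j with hp
  have hlp : IsMultiplier y B J p l := ⟨h.eq_zero, h.nonneg, rfl⟩
  have hproj : projAlong y a x₀ p = projAlong y a x₀ q := by
    rw [← h.sum_eq, projAlong, hlp.inner_eq]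
    simp only [projAlong, smul_sub, Finset.sum_sub_distrib, hp, Finset.sum_div, Finset.sum_smul,
      smul_smul, mul_div_assoc]
  set r := (⟪q, x₀⟫ - ⟪p, x₀⟫) / ⟪y a, x₀⟫
  have hr : 0 ≤ r := div_nonneg (by linarith [hlp.inner_nonpos hx₀]) ha₀.le
  have hsingle : (0 : ι → ℝ) ≤ Pi.single a r := Pi.single_nonneg.2 hr
  refine ⟨l + Pi.single a r, fun j hj => ?_, fun j hj => ?_, ?_⟩
  · rw [Finset.mem_insert, not_or] at hj
    simp [h.eq_zero j hj.2, hj.1]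
  · exact add_nonneg (h.nonneg j hj) (hsingle j)
  · simp only [Pi.add_apply, add_smul, Finset.sum_add_distrib, ← hp, Pi.single_apply, ite_smul,
      zero_smul, Finset.sum_ite_eq', Finset.mem_univ, if_true]
    rw [projAlong, projAlong, sub_eq_sub_iff_add_eq_add] at hproj
    simp only [r, sub_div, sub_smul, ← add_sub_assoc, hproj, add_sub_cancel_right]

/-- **Farkas' lemma** -/
theorem exists_isMultiplier_union (B J : Finset ι) (y : ι → V) (q : V)
    (h : ∀ u ∈ solutionSet y 0 J B, ⟪q, u⟫ ≤ 0) : ∃ l, IsMultiplier y B (J ∪ B) q l := by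
  induction J using Finset.induction_on generalizing y q with
  | empty =>
    have : FiniteDimensional ℝ (Submodule.span ℝ (y '' B)) :=
      .span_of_finite ℝ (B.finite_toSet.image y)
    rw [Finset.empty_union]
    refine exists_isMultiplier_of_mem_span ?_
    rw [← Submodule.orthogonal_orthogonal (Submodule.span ℝ (y '' B)), Submodule.mem_orthogonal']
    intro u hu
    have hu := mem_orthogonal_span_image_iff.1 hu
    refine le_antisymm (h u ⟨by simp, hu⟩) ?_
    simpa using h (-u) ⟨by simp, fun i hi => by simp [hu i hi]⟩
  | insert a J _ ih =>
    by_cases hJ : ∀ u ∈ solutionSet y 0 J B, ⟪q, u⟫ ≤ 0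
    · obtain ⟨l, hl⟩ := ih y q hJ
      rw [Finset.insert_union]
      exact ⟨l, fun j hj => hl.eq_zero j fun h => hj (Finset.mem_insert_of_mem h),
        hl.nonneg, hl.sum_eq⟩
    push Not at hJ
    obtain ⟨x₀, hx₀, hqx₀⟩ := hJ
    have hax₀ : 0 < ⟪y a, x₀⟫ := by
      by_contra! hle
      exact hqx₀.not_ge (h x₀ ⟨(Finset.forall_mem_insert ..).2 ⟨hle, hx₀.1⟩, hx₀.2⟩)
    obtain ⟨l, hl⟩ := ih (fun j => projAlong y a x₀ (y j)) (projAlong y a x₀ q) fun u hu => by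
      rw [inner_projAlong]
      refine h _ ⟨(Finset.forall_mem_insert ..).2 ⟨?_, fun j hj => ?_⟩, fun j hj => ?_⟩
      · simp [inner_sub_right, real_inner_smul_right, hax₀.ne']
      · simpa only [inner_projAlong] using hu.1 j hj
      · simpa only [inner_projAlong] using hu.2 j hj
    rw [Finset.insert_union]
    refine hl.of_projAlong hax₀ hqx₀.le ⟨?_, hx₀.2⟩
    rintro j hj
    exact (Finset.mem_union.1 hj).elim (hx₀.1 j) fun hjB => (hx₀.2 j hjB).le

theorem mem_mixedCone_iff (hBJ : B ⊆ J) :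
    q ∈ mixedCone y B J ↔ ∀ u ∈ solutionSet y 0 J B, ⟪q, u⟫ ≤ 0 := by
  refine ⟨fun ⟨l, hl⟩ u hu => hl.inner_nonpos hu, fun h => ?_⟩
  obtain ⟨l, hl⟩ := exists_isMultiplier_union B J y q h
  exact ⟨l, Finset.union_eq_left.2 hBJ ▸ hl⟩

theorem isClosed_mixedCone (hBJ : B ⊆ J) : IsClosed (mixedCone y B J) := by
  have : mixedCone y B J = ⋂ u ∈ solutionSet y 0 J B, {q | ⟪q, u⟫ ≤ 0} := by
    ext q
    simp [mem_mixedCone_iff hBJ]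
  rw [this]
  exact isClosed_biInter fun u _ => isClosed_le (by fun_prop) continuous_const

end Farkas
section EulerRelation

variable {V : Type*} [NormedAddCommGroup V] [InnerProductSpace ℝ V] {ι : Type*}
  {y : ι → V} {c : ι → ℝ} {A B J : Finset ι} {U : Set V} {a b : ι} {w : V}

theorem finrank_image_insert_of_mem_span (ha : y a ∈ Submodule.span ℝ (y '' J)) :
    Set.finrank ℝ (y '' (insert a J : Finset ι)) = Set.finrank ℝ (y '' J) := by
  rw [Set.finrank, Set.finrank, Finset.coe_insert, Set.image_insert_eq,
    Submodule.span_insert_eq_span ha]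

theorem finrank_image_insert_of_notMem_span [FiniteDimensional ℝ V]
    (ha : y a ∉ Submodule.span ℝ (y '' J)) :
    Set.finrank ℝ (y '' (insert a J : Finset ι)) = Set.finrank ℝ (y '' J) + 1 := by
  rw [Set.finrank, Set.finrank, Finset.coe_insert, Set.image_insert_eq, Submodule.span_insert,
    sup_comm, Submodule.finrank_sup_span_singleton ha]

theorem exists_mem_orthogonal_inner_pos {W : Submodule ℝ V} [W.HasOrthogonalProjection] {v : V}
    (hv : v ∉ W) : ∃ u ∈ Wᗮ, 0 < ⟪v, u⟫ := by
  obtain ⟨p, hp, u, hu, rfl⟩ := W.exists_add_mem_mem_orthogonal v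
  refine ⟨u, hu, ?_⟩
  rw [inner_add_left, W.inner_right_of_mem_orthogonal hp hu, zero_add, real_inner_self_pos]
  rintro rfl
  exact hv (by simpa using hp)

/-- The Euler characteristic of the solution set of a homogeneous system cut with the open set `U`,
taken over its relatively open faces that meet `U` and weighted by codimension. -/
def eulerSum (y : ι → V) (A B : Finset ι) (U : Set V) : ℤ :=
  ∑ J ∈ A.powerset,
    if (stratum y 0 A B J ∩ U).Nonempty then (-1) ^ Set.finrank ℝ (y '' J) else 0

theorem nonempty_inter_hyperplane_iff {W : Submodule ℝ V} [W.HasOrthogonalProjection] {v : V}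
    (hv : v ∉ W) (hU : IsOpen U) (hUc : Convex ℝ U) :
    ((Wᗮ : Set V) ∩ U ∩ {z | ⟪v, z⟫ = 0}).Nonempty ↔
      ((Wᗮ : Set V) ∩ U ∩ {z | ⟪v, z⟫ < 0}).Nonempty ∧
        ((Wᗮ : Set V) ∩ U ∩ {z | 0 < ⟪v, z⟫}).Nonempty := by
  constructor
  · rintro ⟨z, ⟨hzW, hzU⟩, hz : ⟪v, z⟫ = 0⟩
    obtain ⟨u, hu, hvu⟩ := exists_mem_orthogonal_inner_pos hv
    have hnear : ∀ᶠ e : ℝ in 𝓝 0, z + e • u ∈ U :=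
      ContinuousAt.eventually_mem (by fun_prop) (hU.mem_nhds (by simpa using hzU))
    have hmem (e : ℝ) : z + e • u ∈ (Wᗮ : Set V) := Wᗮ.add_mem hzW (Wᗮ.smul_mem e hu)
    have hinner (e : ℝ) : ⟪v, z + e • u⟫ = e * ⟪v, u⟫ := by
      rw [inner_add_right, hz, zero_add, real_inner_smul_right]
    obtain ⟨e₁, he₁, he₁'⟩ := ((hnear.filter_mono nhdsWithin_le_nhds).and
      (self_mem_nhdsWithin (s := Iio 0))).exists
    obtain ⟨e₂, he₂, he₂'⟩ := ((hnear.filter_mono nhdsWithin_le_nhds).and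
      (self_mem_nhdsWithin (s := Ioi 0))).exists
    exact ⟨⟨_, ⟨hmem e₁, he₁⟩, (hinner e₁).trans_lt (mul_neg_of_neg_of_pos he₁' hvu)⟩,
      ⟨_, ⟨hmem e₂, he₂⟩, (mul_pos he₂' hvu).trans_eq (hinner e₂).symm⟩⟩
  · rintro ⟨⟨z₁, hz₁, hneg⟩, z₂, hz₂, hpos⟩
    have hconv : Convex ℝ ((Wᗮ : Set V) ∩ U) := Wᗮ.convex.inter hUc
    obtain ⟨z, hz, hz₀⟩ := hconv.isPreconnected.intermediate_value hz₁ hz₂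
      (f := fun z => ⟪v, z⟫) (by fun_prop) ⟨le_of_lt hneg, le_of_lt hpos⟩
    exact ⟨z, hz, hz₀⟩

theorem stratum_insert (haJ : a ∉ J) :
    stratum y c (insert a A) B J = stratum y c A B J ∩ {z | ⟪y a, z⟫ < c a} := by
  ext z
  simp only [stratum, solutionSet, activeSet, Finset.filter_insert, Finset.forall_mem_insert,
    mem_ofPred_eq, mem_inter_iff]
  split_ifs with h
  · simp only [h, lt_irrefl, and_false, iff_false, not_and]
    rintro - rfl
    exact haJ (Finset.mem_insert_self _ _)
  · rw [lt_iff_le_and_ne]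
    tauto

theorem stratum_insert_insert (haA : a ∉ A) (haJ : a ∉ J) :
    stratum y c (insert a A) B (insert a J) = stratum y c A B J ∩ {z | ⟪y a, z⟫ = c a} := by
  ext z
  simp only [stratum, solutionSet, activeSet, Finset.filter_insert, Finset.forall_mem_insert,
    mem_ofPred_eq, mem_inter_iff]
  split_ifs with h
  · have haz : a ∉ ({i ∈ A | ⟪y i, z⟫ = c i} : Finset ι) := fun h => haA (Finset.mem_filter.1 h).1
    have hJ : insert a ({i ∈ A | ⟪y i, z⟫ = c i} : Finset ι) = insert a J ↔
        ({i ∈ A | ⟪y i, z⟫ = c i} : Finset ι) = J := by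
      refine ⟨fun h => ?_, congrArg _⟩
      rw [← Finset.erase_insert haz, h, Finset.erase_insert haJ]
    simp only [h, hJ, le_refl, true_and, and_true]
  · simp only [h, and_false, iff_false, not_and]
    intro _ hins
    exact haA (Finset.mem_filter.1 (hins ▸ Finset.mem_insert_self a J)).1

theorem stratum_zero_eq (hBJ : B ⊆ J) (hJA : J ⊆ A) :
    stratum y 0 A B J =
      ((Submodule.span ℝ (y '' J))ᗮ : Set V) ∩ ⋂ i ∈ A \ J, {z | ⟪y i, z⟫ < 0} := by
  ext z
  simp [mem_stratum_iff hBJ hJA, mem_orthogonal_span_image_iff]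

theorem stratum_eq_empty (hBA : B ⊆ A) (hBJ : ¬ B ⊆ J) : stratum y c A B J = ∅ :=
  eq_empty_of_forall_notMem fun _ hz => hBJ (hz.2 ▸ subset_activeSet hBA hz.1)

/-- When a hyperplane passes through a relatively open convex set without containing it, it cuts it
into two pieces of the same dimension and one piece of codimension one, so the signs cancel. -/
theorem ite_nonempty_cut [FiniteDimensional ℝ V] (hU : IsOpen U) (hUc : Convex ℝ U) {X : Set V}
    (hX : X = ((Submodule.span ℝ (y '' J))ᗮ : Set V) ∩ U) :
    (if X.Nonempty then (-1) ^ Set.finrank ℝ (y '' J) else 0 : ℤ) =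
      (if (X ∩ {z | ⟪y a, z⟫ < 0}).Nonempty then (-1) ^ Set.finrank ℝ (y '' J) else 0) +
      (if (X ∩ {z | ⟪y a, z⟫ = 0}).Nonempty then
        (-1) ^ Set.finrank ℝ (y '' (insert a J : Finset ι)) else 0) +
      if (X ∩ {z | 0 < ⟪y a, z⟫}).Nonempty then (-1) ^ Set.finrank ℝ (y '' J) else 0 := by
  by_cases ha : y a ∈ Submodule.span ℝ (y '' J)
  · have hzero : X ⊆ {z | ⟪y a, z⟫ = 0} := fun z hz =>
      Submodule.inner_right_of_mem_orthogonal ha (hX ▸ hz).1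
    have hneg : X ∩ {z | ⟪y a, z⟫ < 0} = ∅ :=
      eq_empty_of_forall_notMem fun z hz => (hzero hz.1).not_lt hz.2
    have hpos : X ∩ {z | 0 < ⟪y a, z⟫} = ∅ :=
      eq_empty_of_forall_notMem fun z hz => (hzero hz.1).not_gt hz.2
    rw [finrank_image_insert_of_mem_span ha]
    simp [hneg, hpos, inter_eq_left.2 hzero]
  · have hiff := hX ▸ nonempty_inter_hyperplane_iff ha hU hUc
    have hsplit : X.Nonempty ↔ (X ∩ {z | ⟪y a, z⟫ < 0}).Nonempty ∨
        (X ∩ {z | 0 < ⟪y a, z⟫}).Nonempty := by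
      refine ⟨fun ⟨z, hz⟩ => ?_, fun h => h.elim (·.left) (·.left)⟩
      rcases lt_trichotomy ⟪y a, z⟫ 0 with h | h | h
      exacts [.inl ⟨z, hz, h⟩, .inl (hiff.1 ⟨z, hz, h⟩).1, .inr ⟨z, hz, h⟩]
    rw [finrank_image_insert_of_notMem_span ha, pow_succ, hsplit, hiff]
    split_ifs <;> first | tauto | ring

theorem eulerSum_cut [FiniteDimensional ℝ V] (hBA : B ⊆ A) (ha : a ∉ A) (hU : IsOpen U)
    (hUc : Convex ℝ U) :
    eulerSum y A B U =
      eulerSum y (insert a A) B U + eulerSum y A B (U ∩ {z | 0 < ⟪y a, z⟫}) := by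
  unfold eulerSum
  rw [Finset.sum_powerset_insert ha, ← Finset.sum_add_distrib, ← Finset.sum_add_distrib]
  refine Finset.sum_congr rfl fun J hJ => ?_
  have hJA := Finset.mem_powerset.1 hJ
  have haJ : a ∉ J := fun h => ha (hJA h)
  rw [stratum_insert haJ, stratum_insert_insert ha haJ, inter_right_comm, inter_right_comm _ _ U,
    ← inter_assoc]
  by_cases hBJ : B ⊆ J
  · rw [stratum_zero_eq hBJ hJA, inter_assoc]
    refine ite_nonempty_cut (IsOpen.inter ?_ hU) (Convex.inter ?_ hUc) rfl
    · exact isOpen_biInter_finset fun i _ => isOpen_lt (by fun_prop) continuous_const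
    · exact convex_iInter₂ fun i _ => convex_halfSpace_lt (innerₗ V (y i)).isLinear 0
  · simp [stratum_eq_empty hBA hBJ]

theorem eulerSum_self (hwB : ∀ i ∈ B, ⟪y i, w⟫ = 0) (hb : 0 < ⟪y b, w⟫)
    (hUw : ∀ z ∈ U, ∀ t : ℝ, 0 ≤ t → z + t • w ∈ U) :
    eulerSum y B B U = eulerSum y B B (U ∩ {z | 0 < ⟪y b, z⟫}) := by
  unfold eulerSum
  refine Finset.sum_congr rfl fun J _ => if_congr ⟨?_, fun h => ?_⟩ rfl rfl
  · rintro ⟨z, ⟨hz, hzJ⟩, hzU⟩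
    have hinner (i : ι) (hi : i ∈ B) (t : ℝ) : ⟪y i, z + t • w⟫ = ⟪y i, z⟫ := by
      rw [inner_add_right, real_inner_smul_right, hwB i hi, mul_zero, add_zero]
    obtain ⟨t, ht₀, ht⟩ : ∃ t : ℝ, 0 ≤ t ∧ 0 < ⟪y b, z + t • w⟫ := by
      refine ⟨(|⟪y b, z⟫| + 1) / ⟪y b, w⟫, by positivity, ?_⟩
      rw [inner_add_right, real_inner_smul_right, div_mul_cancel₀ _ hb.ne']
      linarith [neg_abs_le ⟪y b, z⟫]
    refine ⟨z + t • w, ⟨⟨fun i hi => ?_, fun i hi => ?_⟩, ?_⟩, hUw z hzU t ht₀, ht⟩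
    · exact (hinner i hi t).trans_le (hz.1 i hi)
    · exact (hinner i hi t).trans (hz.2 i hi)
    · rw [← hzJ]
      exact Finset.filter_congr fun i hi => by rw [hinner i hi]
  · exact h.mono (inter_subset_inter_right _ inter_subset_left)

theorem eulerSum_eq_zero [FiniteDimensional ℝ V] (hU : IsOpen U) (hUc : Convex ℝ U)
    (hUw : ∀ z ∈ U, ∀ t : ℝ, 0 ≤ t → z + t • w ∈ U) (hBA : B ⊆ A) (hwA : ∀ i ∈ A, 0 ≤ ⟪y i, w⟫)
    (hwB : ∀ i ∈ B, ⟪y i, w⟫ = 0) (hbA : b ∈ A) (hb : 0 < ⟪y b, w⟫) :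
    eulerSum y A B U = 0 := by
  have hbB : b ∉ B := fun h => hb.ne' (hwB b h)
  suffices H : ∀ T : Finset ι, (∀ i ∈ T, 0 ≤ ⟪y i, w⟫) → ∀ U : Set V, IsOpen U → Convex ℝ U →
      (∀ z ∈ U, ∀ t : ℝ, 0 ≤ t → z + t • w ∈ U) → eulerSum y (insert b B ∪ T) B U = 0 by
    have hA : insert b B ∪ A = A := Finset.union_eq_right.2 (Finset.insert_subset hbA hBA)
    exact hA ▸ H A hwA U hU hUc hUw
  intro T
  induction T using Finset.induction_on with
  | empty =>
    intro _ U hU hUc hUw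
    have hcut := eulerSum_cut (y := y) subset_rfl hbB hU hUc
    rw [← eulerSum_self hwB hb hUw] at hcut
    simpa using hcut
  | insert a T _ ih =>
    intro hwT U hU hUc hUw
    rw [Finset.forall_mem_insert] at hwT
    rw [Finset.union_insert]
    by_cases ha : a ∈ insert b B ∪ T
    · rw [Finset.insert_eq_of_mem ha]
      exact ih hwT.2 U hU hUc hUw
    have hcut := eulerSum_cut (y := y) (U := U)
      ((Finset.subset_insert b B).trans Finset.subset_union_left) ha hU hUc
    rw [ih hwT.2 U hU hUc hUw, ih hwT.2 (U ∩ {z | 0 < ⟪y a, z⟫})] at hcut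
    · simpa using hcut.symm
    · exact hU.inter (isOpen_lt continuous_const (by fun_prop))
    · exact hUc.inter (convex_halfSpace_gt (innerₗ V (y a)).isLinear 0)
    · rintro z ⟨hz, hz₀⟩ t ht
      refine ⟨hUw z hz t ht, ?_⟩
      rw [mem_ofPred_eq, inner_add_right, real_inner_smul_right]
      exact add_pos_of_pos_of_nonneg hz₀ (mul_nonneg ht hwT.1)

/-- **Euler's relation** for polyhedral cones that are not linear subspaces. -/
theorem sum_activeSets_eq_zero [FiniteDimensional ℝ V] [Fintype ι] {u : V} (hBA : B ⊆ A)
    (hu : u ∈ solutionSet y 0 A B) (hbA : b ∈ A) (hb : ⟪y b, u⟫ < 0) :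
    ∑ J with J ∈ activeSets y 0 A B, (-1 : ℤ) ^ Set.finrank ℝ (y '' J) = 0 := by
  have hzero : eulerSum y A B univ = 0 :=
    eulerSum_eq_zero (w := -u) (b := b) isOpen_univ convex_univ (fun _ _ _ _ => mem_univ _) hBA
      (fun i hi => by simpa using hu.1 i hi) (fun i hi => by simpa using hu.2 i hi) hbA
      (by simpa using hb)
  rw [← hzero, eulerSum, ← Finset.sum_filter]
  refine Finset.sum_congr (Finset.ext fun J => ?_) fun _ _ => rfl
  simp only [Finset.mem_filter, Finset.mem_univ, true_and, Finset.mem_powerset, inter_univ]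
  refine ⟨fun ⟨z, hz⟩ => ⟨hz.2 ▸ activeSet_subset, z, hz⟩, And.right⟩

end EulerRelation
section ReflectedCells

variable {V : Type*} [NormedAddCommGroup V] [InnerProductSpace ℝ V] {ι : Type*} [Fintype ι]

/-- The face on which the constraints in `J` are tight, with its normal cone subtracted. -/
def reflectedCell (y : ι → V) (c : ι → ℝ) (A B J : Finset ι) : Set V :=
  solutionSet y c A J - mixedCone y B J

/-- The number of reflected cells that contain `x`, each counted with the sign given by the
codimension of its face. -/
def cellSum (y : ι → V) (c : ι → ℝ) (A B : Finset ι) (x : V) : ℤ :=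
  ∑ J with J ∈ activeSets y c A B ∧ x ∈ reflectedCell y c A B J, (-1) ^ Set.finrank ℝ (y '' J)

variable {y : ι → V} {c : ι → ℝ} {A B J : Finset ι} {f f' f₀ q x n z : V} {l : ι → ℝ}

theorem mem_reflectedCell :
    x ∈ reflectedCell y c A B J ↔ ∃ f ∈ solutionSet y c A J, f - x ∈ mixedCone y B J := by
  simp only [reflectedCell, Set.mem_sub]
  refine exists_congr fun f => and_congr_right fun _ => ⟨?_, fun h => ⟨_, h, sub_sub_self f x⟩⟩
  rintro ⟨q, hq, rfl⟩
  rwa [sub_sub_cancel]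

theorem mixedCone_subset_span : mixedCone y B J ⊆ Submodule.span ℝ (y '' J) := by
  rintro _ ⟨l, hl⟩
  rw [← hl.sum_eq]
  refine Submodule.sum_mem _ fun j _ => ?_
  by_cases hj : j ∈ J
  · exact Submodule.smul_mem _ _ (Submodule.subset_span (mem_image_of_mem y hj))
  · simp [hl.eq_zero j hj]

omit [Fintype ι] in
theorem sub_mem_orthogonal (hf : f ∈ solutionSet y c A J) (hf' : f' ∈ solutionSet y c A J) :
    f - f' ∈ (Submodule.span ℝ (y '' J))ᗮ :=
  mem_orthogonal_span_image_iff.2 fun i hi => by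
    rw [inner_sub_right, hf.2 i hi, hf'.2 i hi, sub_self]

theorem eq_of_sub_mem_mixedCone (hf : f ∈ solutionSet y c A J) (hf' : f' ∈ solutionSet y c A J)
    (hq : f - x ∈ mixedCone y B J) (hq' : f' - x ∈ mixedCone y B J) : f = f' := by
  have hspan : f - f' ∈ Submodule.span ℝ (y '' J) := by
    rw [← sub_sub_sub_cancel_right f f' x]
    exact Submodule.sub_mem _ (mixedCone_subset_span hq) (mixedCone_subset_span hq')
  exact sub_eq_zero.1 <| inner_self_eq_zero.1 <|
    Submodule.inner_right_of_mem_orthogonal hspan (sub_mem_orthogonal hf hf')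

/-- Since the face and its normal cone are orthogonal, the decomposition of `x` is read off the
orthogonal projection onto the span of the normal cone. -/
theorem mem_reflectedCell_iff_starProjection [FiniteDimensional ℝ V]
    (hf₀ : f₀ ∈ solutionSet y c A J) :
    x ∈ reflectedCell y c A B J ↔
      x - (Submodule.span ℝ (y '' J)).starProjection (x - f₀) ∈ solutionSet y c A J ∧
        -(Submodule.span ℝ (y '' J)).starProjection (x - f₀) ∈ mixedCone y B J := by
  set W := Submodule.span ℝ (y '' J)
  rw [mem_reflectedCell]
  constructor
  · rintro ⟨f, hf, hq⟩
    have hproj : W.starProjection (x - f₀) = x - f := by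
      refine Submodule.eq_starProjection_of_mem_orthogonal ?_ ?_
      · exact neg_sub f x ▸ W.neg_mem (mixedCone_subset_span hq)
      · exact sub_sub_sub_cancel_left f₀ f x ▸ sub_mem_orthogonal hf hf₀
    rw [hproj, sub_sub_cancel, neg_sub]
    exact ⟨hf, hq⟩
  · rintro ⟨hf, hq⟩
    refine ⟨_, hf, ?_⟩
    rwa [sub_sub_cancel_left]

theorem isClosed_reflectedCell [FiniteDimensional ℝ V] (hBJ : B ⊆ J) :
    IsClosed (reflectedCell y c A B J) := by
  rcases (solutionSet y c A J).eq_empty_or_nonempty with h | ⟨f₀, hf₀⟩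
  · simp [reflectedCell, h]
  · have : reflectedCell y c A B J =
        {x | x - (Submodule.span ℝ (y '' J)).starProjection (x - f₀) ∈ solutionSet y c A J} ∩
          {x | -(Submodule.span ℝ (y '' J)).starProjection (x - f₀) ∈ mixedCone y B J} :=
      Set.ext fun x => mem_reflectedCell_iff_starProjection hf₀
    rw [this]
    exact (isClosed_solutionSet.preimage (by fun_prop)).inter
      ((isClosed_mixedCone hBJ).preimage (by fun_prop))

end ReflectedCells

section LocalStructure

variable {V : Type*} [NormedAddCommGroup V] [InnerProductSpace ℝ V] {ι : Type*}
  {y : ι → V} {c : ι → ℝ} {A B B' J : Finset ι} {f g h q x n z : V} {l : ι → ℝ}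

theorem eventually_inner_add_smul_lt (hn : n ∈ solutionSet y c A B) (g : V) :
    ∀ᶠ e : ℝ in 𝓝[>] 0, ∀ i ∈ A, i ∉ activeSet y c A n → ⟪y i, n + e • g⟫ < c i := by
  rw [Filter.eventually_all_finset]
  intro i hi
  rw [eventually_imp_distrib_left]
  intro hin
  have hlt : ⟪y i, n + (0 : ℝ) • g⟫ < c i := by
    simpa using (hn.1 i hi).lt_of_ne fun h => hin (mem_activeSet.2 ⟨hi, h⟩)
  have hcont : ContinuousAt (fun e : ℝ => ⟪y i, n + e • g⟫) 0 := by fun_prop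
  exact (hcont.eventually_lt continuousAt_const hlt).filter_mono nhdsWithin_le_nhds

theorem eventually_add_smul_mem_solutionSet_iff (hn : n ∈ solutionSet y c A J) (g : V) :
    ∀ᶠ e : ℝ in 𝓝[>] 0,
      (n + e • g ∈ solutionSet y c A J ↔ g ∈ solutionSet y 0 (activeSet y c A n) J) := by
  filter_upwards [eventually_inner_add_smul_lt hn g, self_mem_nhdsWithin] with e hlt he
  have he : 0 < e := he
  simp only [solutionSet, mem_ofPred_eq, mem_activeSet, inner_add_right, real_inner_smul_right,
    Pi.zero_apply] at hlt ⊢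
  refine and_congr ⟨fun h i hi => ?_, fun h i hi => ?_⟩ (forall₂_congr fun i hi => ?_)
  · exact nonpos_of_mul_nonpos_right (by linarith [h i hi.1, hi.2]) he
  · by_cases hin : ⟪y i, n⟫ = c i
    · linarith [mul_nonpos_of_nonneg_of_nonpos he.le (h i ⟨hi, hin⟩)]
    · exact (hlt i hi fun h => hin h.2).le
  · rw [hn.2 i hi, add_eq_left, mul_eq_zero, or_iff_right he.ne']

/-- The faces of the tangent cone at `n` are the tangent cones of the faces through `n`. -/
theorem mem_activeSets_activeSet_iff (hn : n ∈ solutionSet y c A B) (hBB' : B ⊆ B')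
    (hB' : B' ⊆ activeSet y c A n) :
    J ∈ activeSets y 0 (activeSet y c A n) B' ↔
      J ∈ activeSets y c A B ∧ B' ⊆ J ∧ J ⊆ activeSet y c A n := by
  constructor
  · rintro ⟨g, hg⟩
    have hB'J : B' ⊆ J := hg.2 ▸ subset_activeSet hB' hg.1
    have hJn : J ⊆ activeSet y c A n := hg.2 ▸ activeSet_subset
    rw [mem_stratum_iff hB'J hJn] at hg
    obtain ⟨e, hlt, he⟩ := ((eventually_inner_add_smul_lt hn g).and self_mem_nhdsWithin).exists
    have he : 0 < e := he
    refine ⟨⟨n + e • g, ?_⟩, hB'J, hJn⟩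
    rw [mem_stratum_iff (hBB'.trans hB'J) (hJn.trans activeSet_subset)]
    refine ⟨fun i hi => ?_, fun i hi hiJ => ?_⟩
    · simp [inner_add_right, real_inner_smul_right, hg.1 i hi, (mem_activeSet.1 (hJn hi)).2]
    · by_cases hin : i ∈ activeSet y c A n
      · rw [inner_add_right, real_inner_smul_right, (mem_activeSet.1 hin).2]
        exact add_lt_of_neg_right _ (mul_neg_of_pos_of_neg he (hg.2 i hin hiJ))
      · exact hlt i hi hin
  · rintro ⟨⟨z, hz⟩, hB'J, hJn⟩
    rw [mem_stratum_iff (hBB'.trans hB'J) (hJn.trans activeSet_subset)] at hz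
    refine ⟨z - n, (mem_stratum_iff hB'J hJn).2 ⟨fun i hi => ?_, fun i hi hiJ => ?_⟩⟩
    · rw [inner_sub_right, hz.1 i hi, (mem_activeSet.1 (hJn hi)).2, sub_self, Pi.zero_apply]
    · rw [inner_sub_right, (mem_activeSet.1 hi).2]
      exact sub_neg.2 (hz.2 i (mem_activeSet.1 hi).1 hiJ)

variable [Fintype ι]

/-- The indices whose multipliers may be perturbed in both directions. -/
def lockedSet (B : Finset ι) (l : ι → ℝ) : Finset ι :=
  B ∪ ({j | l j ≠ 0} : Finset ι)

theorem subset_lockedSet : B ⊆ lockedSet B l :=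
  Finset.subset_union_left

theorem eventually_add_smul_mem_mixedCone_iff (hl : IsMultiplier y B J q l) (h : V) :
    ∀ᶠ e : ℝ in 𝓝[>] 0,
      (q + e • h ∈ mixedCone y B J ↔ h ∈ mixedCone y (lockedSet B l) J) := by
  have hlocked (j : ι) : j ∉ lockedSet B l ↔ j ∉ B ∧ l j = 0 := by simp [lockedSet]
  by_cases hh : h ∈ mixedCone y (lockedSet B l) J
  · obtain ⟨k, hk⟩ := hh
    have hnonneg : ∀ᶠ e : ℝ in 𝓝[>] 0, ∀ j, j ∉ B → 0 ≤ l j + e * k j := by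
      rw [eventually_all]
      intro j
      rw [eventually_imp_distrib_left]
      intro hj
      rcases (hl.nonneg j hj).eq_or_lt with h0 | hpos
      · filter_upwards [self_mem_nhdsWithin] with e he
        rw [← h0, zero_add]
        exact mul_nonneg (le_of_lt he) (hk.nonneg j ((hlocked j).2 ⟨hj, h0.symm⟩))
      · have hcont : ContinuousAt (fun e : ℝ => l j + e * k j) 0 := by fun_prop
        exact ((continuousAt_const.eventually_lt hcont (by simpa using hpos)).filter_mono
          nhdsWithin_le_nhds).mono fun _ => le_of_lt
    filter_upwards [hnonneg] with e he
    refine iff_of_true ⟨fun j => l j + e * k j, fun j hj => ?_, he, ?_⟩ ⟨k, hk⟩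
    · rw [hl.eq_zero j hj, hk.eq_zero j hj, mul_zero, add_zero]
    · simp only [add_smul, mul_smul, Finset.sum_add_distrib, ← Finset.smul_sum, hl.sum_eq,
        hk.sum_eq]
  · filter_upwards [self_mem_nhdsWithin] with e he
    have he : 0 < e := he
    refine iff_of_false ?_ hh
    rintro ⟨k, hk⟩
    refine hh ⟨fun j => e⁻¹ * (k j - l j), fun j hj => ?_, fun j hj => ?_, ?_⟩
    · rw [hk.eq_zero j hj, hl.eq_zero j hj, sub_self, mul_zero]
    · rw [((hlocked j).1 hj).2, sub_zero]
      exact mul_nonneg (inv_nonneg.2 he.le) (hk.nonneg j ((hlocked j).1 hj).1)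
    · simp only [mul_smul, sub_smul, ← Finset.smul_sum, Finset.sum_sub_distrib, hl.sum_eq,
        hk.sum_eq, add_sub_cancel_left, inv_smul_smul₀ he.ne']

/-- Complementary slackness. -/
theorem lockedSet_subset (hBA : B ⊆ A) (hJ : J ∈ activeSets y c A B) (hn : n ∈ solutionSet y c A J)
    (hq : q ∈ mixedCone y B J) (hl : IsMultiplier y B (activeSet y c A n) q l) :
    lockedSet B l ⊆ J := by
  obtain ⟨z, hz, rfl⟩ := hJ
  have hterm : ∀ j ∈ Finset.univ, l j * ⟪y j, z - n⟫ ≤ 0 := by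
    intro j _
    by_cases hj : j ∈ activeSet y c A n
    · rw [inner_sub_right, (mem_activeSet.1 hj).2]
      by_cases hB : j ∈ B
      · rw [hz.2 j hB, sub_self, mul_zero]
      · exact mul_nonpos_of_nonneg_of_nonpos (hl.nonneg j hB)
          (sub_nonpos.2 (hz.1 j (mem_activeSet.1 hj).1))
    · rw [hl.eq_zero j hj, zero_mul]
  have hsum : ∑ j, l j * ⟪y j, z - n⟫ = 0 := by
    rw [← hl.inner_eq]
    exact Submodule.inner_right_of_mem_orthogonal (mixedCone_subset_span hq)
      (sub_mem_orthogonal (mem_solutionSet_activeSet hz) hn)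
  refine Finset.union_subset (subset_activeSet hBA hz) fun j hj => ?_
  have hlj : l j ≠ 0 := (Finset.mem_filter.1 hj).2
  have hjn := mem_activeSet.1 (not_imp_comm.1 (hl.eq_zero j) hlj)
  have hzero := (mul_eq_zero.1 <|
    (Finset.sum_eq_zero_iff_of_nonpos hterm).1 hsum j (Finset.mem_univ j)).resolve_left hlj
  exact mem_activeSet.2 ⟨hjn.1, by rw [← hjn.2, ← sub_eq_zero, ← inner_sub_right, hzero]⟩

theorem eventually_add_smul_mem_reflectedCell_iff [FiniteDimensional ℝ V]
    (hn : n ∈ solutionSet y c A J) (hl : IsMultiplier y B J (n - x) l) (v : V) :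
    ∀ᶠ e : ℝ in 𝓝[>] 0, (x + e • v ∈ reflectedCell y c A B J ↔
      v ∈ reflectedCell y 0 (activeSet y c A n) (lockedSet B l) J) := by
  set W := Submodule.span ℝ (y '' J) with hW
  have hproj : W.starProjection (x - n) = x - n := by
    have : n - x ∈ W := mixedCone_subset_span ⟨l, hl⟩
    exact W.starProjection_eq_self_iff.2 (neg_sub n x ▸ W.neg_mem this)
  filter_upwards [eventually_add_smul_mem_solutionSet_iff hn (v - W.starProjection v),
    eventually_add_smul_mem_mixedCone_iff hl (-W.starProjection v)] with e hface hcone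
  have hmove : W.starProjection (x + e • v - n) = x - n + e • W.starProjection v := by
    rw [add_sub_right_comm, map_add, hproj, map_smul]
  have hzero : (0 : V) ∈ solutionSet y 0 (activeSet y c A n) J := by simp [solutionSet]
  rw [mem_reflectedCell_iff_starProjection hn, mem_reflectedCell_iff_starProjection hzero,
    ← hW, sub_zero, ← hface, ← hcone, hmove]
  congr! 2 <;> module

end LocalStructure
section LocalDecomposition

variable {V : Type*} [NormedAddCommGroup V] [InnerProductSpace ℝ V] {ι : Type*} [Fintype ι]
  {y : ι → V} {c : ι → ℝ} {A B J : Finset ι} {x n : V} {l : ι → ℝ}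

/-- The feet of `x`: the solutions `n` such that `x` is obtained from `n` by subtracting a vector
of the normal cone at `n`. -/
def feet (y : ι → V) (c : ι → ℝ) (A B : Finset ι) (x : V) : Set V :=
  {n ∈ solutionSet y c A B | n - x ∈ mixedCone y B (activeSet y c A n)}

theorem finite_feet : (feet y c A B x).Finite := by
  refine .of_finite_image (f := activeSet y c A) (Set.toFinite _) fun n hn n' hn' h => ?_
  exact eq_of_sub_mem_mixedCone (mem_solutionSet_activeSet hn.1)
    (h ▸ mem_solutionSet_activeSet hn'.1) hn.2 (h ▸ hn'.2)

theorem IsMultiplier.of_lockedSet_subset {J' : Finset ι} {q : V} (hl : IsMultiplier y B J q l)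
    (h : lockedSet B l ⊆ J') : IsMultiplier y B J' q l where
  eq_zero j hj := by_contra fun hlj => hj (h (by simp [lockedSet, hlj]))
  nonneg := hl.nonneg
  sum_eq := hl.sum_eq

theorem lockedSet_subset_activeSet (hBA : B ⊆ A) (hn : n ∈ solutionSet y c A B)
    (hl : IsMultiplier y B (activeSet y c A n) (n - x) l) :
    lockedSet B l ⊆ activeSet y c A n :=
  lockedSet_subset hBA (activeSet_mem_activeSets hn) (mem_solutionSet_activeSet hn) ⟨l, hl⟩ hl

/-- The faces that contribute to the cell sum at `x` through the foot `n` are the faces of the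
critical cone at `n`. -/
theorem mem_activeSets_lockedSet_iff (hBA : B ⊆ A) (hn : n ∈ solutionSet y c A B)
    (hl : IsMultiplier y B (activeSet y c A n) (n - x) l) :
    J ∈ activeSets y 0 (activeSet y c A n) (lockedSet B l) ↔
      J ∈ activeSets y c A B ∧ n ∈ solutionSet y c A J ∧ n - x ∈ mixedCone y B J := by
  rw [mem_activeSets_activeSet_iff hn subset_lockedSet (lockedSet_subset_activeSet hBA hn hl)]
  refine and_congr_right fun hJ => ⟨fun ⟨hlJ, hJn⟩ => ?_, fun ⟨hnJ, hq⟩ => ?_⟩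
  · exact ⟨⟨hn.1, fun i hi => (mem_activeSet.1 (hJn hi)).2⟩, l, hl.of_lockedSet_subset hlJ⟩
  · exact ⟨lockedSet_subset hBA hJ hnJ hq hl,
      subset_activeSet (subset_of_mem_activeSets hJ) hnJ⟩

theorem mem_feet (hJ : J ∈ activeSets y c A B) (hBA : B ⊆ A) (hn : n ∈ solutionSet y c A J)
    (hq : n - x ∈ mixedCone y B J) : n ∈ feet y c A B x :=
  ⟨⟨hn.1, fun i hi => hn.2 i (superset_of_mem_activeSets hBA hJ hi)⟩,
    mixedCone_mono (subset_activeSet (subset_of_mem_activeSets hJ) hn) hq⟩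

theorem eventually_mem_reflectedCell_iff_exists [FiniteDimensional ℝ V] (hBA : B ⊆ A)
    {L : V → ι → ℝ}
    (hL : ∀ n ∈ feet y c A B x, IsMultiplier y B (activeSet y c A n) (n - x) (L n))
    (v : V) (J : Finset ι) :
    ∀ᶠ e : ℝ in 𝓝[>] 0, (J ∈ activeSets y c A B ∧ x + e • v ∈ reflectedCell y c A B J ↔
      ∃ n ∈ feet y c A B x, J ∈ activeSets y 0 (activeSet y c A n) (lockedSet B (L n)) ∧
        v ∈ reflectedCell y 0 (activeSet y c A n) (lockedSet B (L n)) J) := by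
  by_cases hx : J ∈ activeSets y c A B ∧ x ∈ reflectedCell y c A B J
  · obtain ⟨hJ, hx⟩ := hx
    obtain ⟨n, hnJ, hq⟩ := mem_reflectedCell.1 hx
    have hn := mem_feet hJ hBA hnJ hq
    have hloc := (mem_activeSets_lockedSet_iff hBA hn.1 (hL n hn)).2 ⟨hJ, hnJ, hq⟩
    have hl := (hL n hn).of_lockedSet_subset (lockedSet_subset hBA hJ hnJ hq (hL n hn))
    filter_upwards [eventually_add_smul_mem_reflectedCell_iff hnJ hl v] with e he
    rw [he, and_iff_right hJ]
    refine ⟨fun hv => ⟨n, hn, hloc, hv⟩, fun ⟨m, hm, hJm, hv⟩ => ?_⟩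
    obtain ⟨-, hmJ, hmq⟩ := (mem_activeSets_lockedSet_iff hBA hm.1 (hL m hm)).1 hJm
    rwa [eq_of_sub_mem_mixedCone hnJ hmJ hq hmq]
  · have hright : ¬ ∃ n ∈ feet y c A B x,
        J ∈ activeSets y 0 (activeSet y c A n) (lockedSet B (L n)) ∧
          v ∈ reflectedCell y 0 (activeSet y c A n) (lockedSet B (L n)) J := by
      rintro ⟨n, hn, hJn, -⟩
      obtain ⟨hJ, hnJ, hq⟩ := (mem_activeSets_lockedSet_iff hBA hn.1 (hL n hn)).1 hJn
      exact hx ⟨hJ, mem_reflectedCell.2 ⟨n, hnJ, hq⟩⟩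
    simp only [hright, iff_false, not_and]
    rw [eventually_imp_distrib_left]
    intro hJ
    have hopen := (isClosed_reflectedCell (y := y) (c := c) (A := A)
      (superset_of_mem_activeSets hBA hJ)).isOpen_compl
    have hcont : ContinuousAt (fun e : ℝ => x + e • v) 0 := by fun_prop
    exact (hcont.eventually_mem (hopen.mem_nhds (by simpa using fun h => hx ⟨hJ, h⟩))).filter_mono
      nhdsWithin_le_nhds

theorem eventually_cellSum_eq_sum [FiniteDimensional ℝ V] (hBA : B ⊆ A) {L : V → ι → ℝ}
    (hL : ∀ n ∈ feet y c A B x, IsMultiplier y B (activeSet y c A n) (n - x) (L n)) (v : V) :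
    ∀ᶠ e : ℝ in 𝓝[>] 0, cellSum y c A B (x + e • v) =
      ∑ n ∈ (finite_feet (y := y) (c := c) (A := A) (B := B) (x := x)).toFinset,
        cellSum y 0 (activeSet y c A n) (lockedSet B (L n)) v := by
  filter_upwards [eventually_all.2 (eventually_mem_reflectedCell_iff_exists hBA hL v)] with e he
  simp only [cellSum]
  rw [← Finset.sum_biUnion]
  · refine Finset.sum_congr (Finset.ext fun J => ?_) fun _ _ => rfl
    simp [he]
  · intro n hn m hm hnm
    rw [Finset.mem_coe, Set.Finite.mem_toFinset] at hn hm
    refine Finset.disjoint_left.2 fun J hJn hJm => hnm ?_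
    obtain ⟨-, hnJ, hnq⟩ :=
      (mem_activeSets_lockedSet_iff hBA hn.1 (hL n hn)).1 (Finset.mem_filter.1 hJn).2.1
    obtain ⟨-, hmJ, hmq⟩ :=
      (mem_activeSets_lockedSet_iff hBA hm.1 (hL m hm)).1 (Finset.mem_filter.1 hJm).2.1
    exact eq_of_sub_mem_mixedCone hnJ hmJ hnq hmq

theorem eventually_cellSum_eq [FiniteDimensional ℝ V] (hBA : B ⊆ A)
    (hconst : ∀ n ∈ solutionSet y c A B, ∀ l, IsMultiplier y B (activeSet y c A n) (n - x) l →
      ∀ w, cellSum y 0 (activeSet y c A n) (lockedSet B l) w =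
        cellSum y 0 (activeSet y c A n) (lockedSet B l) 0) (v : V) :
    ∀ᶠ e : ℝ in 𝓝[>] 0, cellSum y c A B (x + e • v) = cellSum y c A B x := by
  have hmult : ∀ n ∈ feet y c A B x, ∃ l, IsMultiplier y B (activeSet y c A n) (n - x) l :=
    fun n hn => hn.2
  choose! L hL using hmult
  obtain ⟨e, he⟩ := (eventually_cellSum_eq_sum hBA hL 0).exists
  rw [smul_zero, add_zero] at he
  filter_upwards [eventually_cellSum_eq_sum hBA hL v] with e' he'
  rw [he, he']
  refine Finset.sum_congr rfl fun n hn => ?_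
  have hn := finite_feet.mem_toFinset.1 hn
  exact hconst n hn.1 _ (hL n hn) v

end LocalDecomposition

section RayArgument

theorem apply_add_smul_eq_of_eventually_eq {V α : Type*} [AddCommGroup V] [Module ℝ V] {F : V → α}
    {x v : V} (h : ∀ t : ℝ, 0 ≤ t → ∀ w : V, ∀ᶠ e : ℝ in 𝓝[>] 0,
      F (x + t • v + e • w) = F (x + t • v)) {t : ℝ} (ht : 0 ≤ t) : F (x + t • v) = F x := by
  have hev (s : ℝ) (hs : 0 ≤ s) : ∀ᶠ r in 𝓝 s, F (x + r • v) = F (x + s • v) := by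
    have hright := h s hs v
    have hleft := h s hs (-v)
    rw [← nhdsLT_sup_nhdsGE, ← Ioi_insert, nhdsWithin_insert, eventually_sup, eventually_sup]
    refine ⟨?_, rfl, ?_⟩
    · have hmap := Filter.map_subLeft_nhdsGT (c := s) (a := 0)
      rw [sub_zero] at hmap
      rw [← hmap, eventually_map]
      filter_upwards [hleft] with e he
      rw [← he]
      congr 1
      module
    · have hmap := Filter.map_add_left_nhdsGT (c := s) (a := 0)
      rw [add_zero] at hmap
      rw [← hmap, eventually_map]
      filter_upwards [hright] with e he
      rw [← he]
      congr 1
      module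
  let _ : TopologicalSpace α := ⊥
  have _ : DiscreteTopology α := ⟨rfl⟩
  have hcont : ContinuousOn (fun s : ℝ => F (x + s • v)) (Ici 0) := fun s hs =>
    (tendsto_const_nhds.congr' ((hev s hs).mono fun _ => Eq.symm)).mono_left nhdsWithin_le_nhds
  simpa using isPreconnected_Ici.constant hcont (mem_Ici.2 ht) self_mem_Ici

variable {V : Type*} [NormedAddCommGroup V]

theorem exists_forall_add_smul_mem_of_not_isBounded [NormedSpace ℝ V] [FiniteDimensional ℝ V]
    {S : Set V} (hconv : Convex ℝ S) (hclosed : IsClosed S) (hS : ¬ Bornology.IsBounded S) :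
    ∃ g ≠ 0, ∀ p ∈ S, ∀ t : ℝ, 0 ≤ t → p + t • g ∈ S := by
  obtain ⟨g, hg₀, hg⟩ := not_bounded_iff_exists_ne_zero_mem_asymptoticCone.1 hS
  refine ⟨g, hg₀, fun p hp t ht => ?_⟩
  rw [add_comm]
  exact hconv.smul_vadd_mem_of_isClosed_of_mem_asymptoticCone hclosed ht hg hp

variable [InnerProductSpace ℝ V] {ι : Type*} {y : ι → V} {c : ι → ℝ} {A B : Finset ι}
  {g n u v x : V}

theorem inner_nonpos_of_forall_inner_add_smul_le {w : V} {r : ℝ}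
    (h : ∀ t : ℝ, 0 ≤ t → ⟪w, n + t • g⟫ ≤ r) : ⟪w, g⟫ ≤ 0 := by
  simp only [inner_add_right, real_inner_smul_right] at h
  by_contra! hpos
  have hlim : Tendsto (fun t : ℝ => ⟪w, n⟫ + t * ⟪w, g⟫) atTop atTop :=
    tendsto_atTop_add_const_left _ _ (tendsto_id.atTop_mul_const hpos)
  obtain ⟨t, ht, hr⟩ := ((eventually_ge_atTop 0).and (hlim.eventually_gt_atTop r)).exists
  exact hr.not_ge (h t ht)

theorem mem_solutionSet_zero_of_forall_add_smul_mem
    (h : ∀ t : ℝ, 0 ≤ t → n + t • g ∈ solutionSet y c A B) : g ∈ solutionSet y 0 A B := by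
  refine ⟨fun i hi => inner_nonpos_of_forall_inner_add_smul_le fun t ht => (h t ht).1 i hi,
    fun i hi => ?_⟩
  have h₀ : ⟪y i, n⟫ = c i := by simpa using (h 0 le_rfl).2 i hi
  have h₁ := (h 1 zero_le_one).2 i hi
  rwa [one_smul, inner_add_right, h₀, add_eq_left] at h₁

theorem isBounded_setOf_inner_le [FiniteDimensional ℝ V] (x : V) :
    Bornology.IsBounded
      {n ∈ solutionSet y c A B | ∀ g ∈ solutionSet y 0 A B, ⟪g, n⟫ ≤ ⟪g, x⟫} := by
  set S := {n ∈ solutionSet y c A B | ∀ g ∈ solutionSet y 0 A B, ⟪g, n⟫ ≤ ⟪g, x⟫}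
  have hS : S = solutionSet y c A B ∩ ⋂ g ∈ solutionSet y 0 A B, {n | innerₗ V g n ≤ ⟪g, x⟫} := by
    ext n
    simp [S]
  have hconv : Convex ℝ S := hS ▸ convex_solutionSet.inter
    (convex_iInter₂ fun g _ => convex_halfSpace_le (innerₗ V g).isLinear _)
  have hclosed : IsClosed S := hS ▸ isClosed_solutionSet.inter
    (isClosed_biInter fun g _ => isClosed_le (by fun_prop) continuous_const)
  by_contra hunb
  obtain ⟨g, hg₀, hg⟩ := exists_forall_add_smul_mem_of_not_isBounded hconv hclosed hunb
  obtain ⟨n, hn⟩ : S.Nonempty := Set.nonempty_iff_ne_empty.2 fun h => hunb (by simp [h])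
  have hgrec : g ∈ solutionSet y 0 A B :=
    mem_solutionSet_zero_of_forall_add_smul_mem fun t ht => (hg n hn t ht).1
  exact hg₀ <| real_inner_self_nonpos.1 <|
    inner_nonpos_of_forall_inner_add_smul_le fun t ht => (hg n hn t ht).2 g hgrec

variable [Fintype ι]

theorem inner_le_of_mem_feet (hn : n ∈ feet y c A B x) (hg : g ∈ solutionSet y 0 A B) :
    ⟪g, n⟫ ≤ ⟪g, x⟫ := by
  obtain ⟨-, l, hl⟩ := hn
  have := hl.inner_nonpos ⟨fun i hi => hg.1 i (activeSet_subset hi), hg.2⟩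
  rwa [inner_sub_left, real_inner_comm, real_inner_comm g x, sub_nonpos] at this

theorem cellSum_eq_zero_of_feet_eq_empty (hBA : B ⊆ A) (h : feet y c A B x = ∅) :
    cellSum y c A B x = 0 := by
  refine Finset.sum_eq_zero fun J hJ => absurd h (Set.Nonempty.ne_empty ?_)
  obtain ⟨hJ, hx⟩ := (Finset.mem_filter.1 hJ).2
  obtain ⟨n, hn, hq⟩ := mem_reflectedCell.1 hx
  exact ⟨n, mem_feet hJ hBA hn hq⟩

theorem exists_cellSum_add_smul_eq_zero [FiniteDimensional ℝ V] (hBA : B ⊆ A)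
    (hu : u ∈ solutionSet y 0 A B) (hv : ∀ g ∈ solutionSet y 0 A B, ⟪g, v⟫ ≤ 0)
    (huv : ⟪u, v⟫ < 0) : ∃ t : ℝ, 0 ≤ t ∧ cellSum y c A B (x + t • v) = 0 := by
  obtain ⟨R, hR⟩ := isBounded_iff_forall_norm_le.1
    (isBounded_setOf_inner_le (y := y) (c := c) (A := A) (B := B) x)
  have hlim : Tendsto (fun t : ℝ => ⟪u, x⟫ + t * ⟪u, v⟫) atTop atBot :=
    tendsto_atBot_add_const_left _ _ (tendsto_id.atTop_mul_const_of_neg huv)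
  obtain ⟨t, ht, htR⟩ :=
    ((eventually_ge_atTop 0).and (hlim.eventually_lt_atBot (-(‖u‖ * R)))).exists
  refine ⟨t, ht, cellSum_eq_zero_of_feet_eq_empty hBA ?_⟩
  refine eq_empty_of_forall_notMem fun n hn => ?_
  have hle (g : V) (hg : g ∈ solutionSet y 0 A B) : ⟪g, n⟫ ≤ ⟪g, x⟫ + t * ⟪g, v⟫ := by
    simpa only [inner_add_right, real_inner_smul_right] using inner_le_of_mem_feet hn hg
  have hnR : ‖n‖ ≤ R := hR n ⟨hn.1, fun g hg =>
    (hle g hg).trans (add_le_of_nonpos_right (mul_nonpos_of_nonneg_of_nonpos ht (hv g hg)))⟩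
  have hun : -(‖u‖ * R) ≤ ⟪u, n⟫ :=
    neg_le_of_abs_le ((abs_real_inner_le_norm u n).trans (by gcongr))
  exact (hun.trans (hle u hu)).not_gt htR

theorem cellSum_eq_zero_of_eventually_eq [FiniteDimensional ℝ V] (hBA : B ⊆ A)
    (hu : u ∈ solutionSet y 0 A B) (hv : ∀ g ∈ solutionSet y 0 A B, ⟪g, v⟫ ≤ 0)
    (huv : ⟪u, v⟫ < 0) (hloc : ∀ t : ℝ, 0 ≤ t → ∀ w : V, ∀ᶠ e : ℝ in 𝓝[>] 0,
      cellSum y c A B (x + t • v + e • w) = cellSum y c A B (x + t • v)) :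
    cellSum y c A B x = 0 := by
  obtain ⟨t, ht, h₀⟩ := exists_cellSum_add_smul_eq_zero (c := c) (x := x) hBA hu hv huv
  rw [← apply_add_smul_eq_of_eventually_eq hloc ht, h₀]

end RayArgument

section Cones

variable {V : Type*} [NormedAddCommGroup V] [InnerProductSpace ℝ V] {ι : Type*}

/-- The span of the lineality space of the cone `solutionSet y 0 A B` and the normals of its
equations. Off this subspace the critical cones have fewer inequalities than the cone itself. -/
def spine (y : ι → V) (A B : Finset ι) : Submodule ℝ V :=
  (Submodule.span ℝ (y '' A))ᗮ ⊔ Submodule.span ℝ (y '' B)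

variable {y : ι → V} {c : ι → ℝ} {A B J : Finset ι} {a n p s u v x z : V} {l : ι → ℝ} {b : ι}

theorem orthogonal_span_image_le (hBA : B ⊆ A) :
    (Submodule.span ℝ (y '' A))ᗮ ≤ (Submodule.span ℝ (y '' B))ᗮ :=
  Submodule.orthogonal_le (Submodule.span_mono (image_mono hBA))

theorem mem_solutionSet_zero_of_mem_orthogonal (hBA : B ⊆ A)
    (ha : a ∈ (Submodule.span ℝ (y '' A))ᗮ) : a ∈ solutionSet y 0 A B := by
  rw [mem_orthogonal_span_image_iff] at ha
  exact ⟨fun i hi => (ha i hi).le, fun i hi => ha i (hBA hi)⟩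

theorem exists_eq_add_smul (hBA : B ⊆ A) (hp : p ∈ (spine y A B)ᗮ)
    (htop : spine y A B ⊔ Submodule.span ℝ {p} = ⊤)
    (hz : z ∈ (Submodule.span ℝ (y '' B))ᗮ) :
    ∃ a ∈ (Submodule.span ℝ (y '' A))ᗮ, ∃ r : ℝ, z = a + r • p := by
  obtain ⟨k, hk, q, hq, rfl⟩ := Submodule.mem_sup.1 (htop ▸ Submodule.mem_top : z ∈ _)
  obtain ⟨r, rfl⟩ := Submodule.mem_span_singleton.1 hq
  obtain ⟨a, ha, s, hs, rfl⟩ := Submodule.mem_sup.1 hk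
  have hp' : p ∈ (Submodule.span ℝ (y '' B))ᗮ := Submodule.orthogonal_le le_sup_right hp
  have hsB : s ∈ (Submodule.span ℝ (y '' B))ᗮ := by
    have : s = a + s + r • p - a - r • p := by abel
    rw [this]
    exact sub_mem (sub_mem hz (orthogonal_span_image_le hBA ha)) (Submodule.smul_mem _ r hp')
  have hs₀ : s = 0 := inner_self_eq_zero.1 (Submodule.inner_right_of_mem_orthogonal hs hsB)
  exact ⟨a, ha, r, by rw [hs₀, add_zero]⟩

theorem inner_add_smul_of_mem_orthogonal {i : ι} (ha : a ∈ (Submodule.span ℝ (y '' A))ᗮ)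
    (hi : i ∈ A) (r : ℝ) : ⟪y i, a + r • p⟫ = r * ⟪y i, p⟫ := by
  rw [inner_add_right, mem_orthogonal_span_image_iff.1 ha i hi, zero_add, real_inner_smul_right]

theorem exists_nonneg_eq_add_smul (hBA : B ⊆ A) (hp : p ∈ (spine y A B)ᗮ)
    (htop : spine y A B ⊔ Submodule.span ℝ {p} = ⊤) (hbA : b ∈ A) (hbp : ⟪y b, p⟫ < 0)
    (hz : z ∈ solutionSet y 0 A B) :
    ∃ a ∈ (Submodule.span ℝ (y '' A))ᗮ, ∃ r : ℝ, 0 ≤ r ∧ z = a + r • p := by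
  obtain ⟨a, ha, r, rfl⟩ := exists_eq_add_smul hBA hp htop (mem_orthogonal_span_image_iff.2 hz.2)
  have hle := inner_add_smul_of_mem_orthogonal ha hbA r ▸ hz.1 b hbA
  exact ⟨a, ha, r, nonneg_of_mul_nonpos_left hle hbp, rfl⟩

theorem mem_solutionSet_zero_of_spine_sup_eq_top (hBA : B ⊆ A) (hp : p ∈ (spine y A B)ᗮ)
    (htop : spine y A B ⊔ Submodule.span ℝ {p} = ⊤) (hbA : b ∈ A) (hbp : ⟪y b, p⟫ < 0)
    (hu : u ∈ solutionSet y 0 A B) (hbu : ⟪y b, u⟫ < 0) : p ∈ solutionSet y 0 A B := by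
  obtain ⟨a, ha, r, -, rfl⟩ := exists_nonneg_eq_add_smul hBA hp htop hbA hbp hu
  have hr : 0 < r :=
    pos_of_mul_neg_left (inner_add_smul_of_mem_orthogonal ha hbA r ▸ hbu) hbp.le
  refine ⟨fun i hi => nonpos_of_mul_nonpos_right ?_ hr, ?_⟩
  · exact inner_add_smul_of_mem_orthogonal ha hi r ▸ hu.1 i hi
  · exact mem_orthogonal_span_image_iff.1 (Submodule.orthogonal_le le_sup_right hp)

variable [Fintype ι]

theorem neg_mem_mixedCone_of_mem_span (hBJ : B ⊆ J) (hs : s ∈ Submodule.span ℝ (y '' B)) :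
    -s ∈ mixedCone y B J := by
  obtain ⟨l, hl⟩ := exists_isMultiplier_of_mem_span (neg_mem hs)
  exact mixedCone_mono hBJ ⟨l, hl⟩

theorem cellSum_eq_sum_activeSets (h : ∀ J ∈ activeSets y c A B, x ∈ reflectedCell y c A B J) :
    cellSum y c A B x = ∑ J with J ∈ activeSets y c A B, (-1) ^ Set.finrank ℝ (y '' J) := by
  refine Finset.sum_congr (Finset.filter_congr fun J _ => ?_) fun _ _ => rfl
  exact and_iff_left_of_imp (h J)

theorem mem_reflectedCell_of_mem_spine (hBA : B ⊆ A) (hx : x ∈ spine y A B)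
    (hJ : J ∈ activeSets y 0 A B) : x ∈ reflectedCell y 0 A B J := by
  obtain ⟨a, ha, s, hs, rfl⟩ := Submodule.mem_sup.1 hx
  refine mem_reflectedCell.2 ⟨a, mem_solutionSet_zero_of_mem_orthogonal
    (subset_of_mem_activeSets hJ) ha, ?_⟩
  rw [sub_add_cancel_left]
  exact neg_mem_mixedCone_of_mem_span (superset_of_mem_activeSets hBA hJ) hs

theorem mem_reflectedCell_of_forall_inner_eq_zero [FiniteDimensional ℝ V] (hBA : B ⊆ A)
    (hlin : ∀ u ∈ solutionSet y 0 A B, ∀ i ∈ A, ⟪y i, u⟫ = 0) (x : V)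
    (hJ : J ∈ activeSets y 0 A B) : x ∈ reflectedCell y 0 A B J := by
  have hJA : J = A := by
    obtain ⟨z, hz, rfl⟩ := hJ
    exact Finset.filter_true_of_mem (hlin z hz)
  subst hJA
  obtain ⟨s, hs, a, ha, rfl⟩ := (Submodule.span ℝ (y '' J)).exists_add_mem_mem_orthogonal x
  refine mem_reflectedCell.2 ⟨a, mem_solutionSet_zero_of_mem_orthogonal subset_rfl ha, ?_⟩
  rw [sub_add_cancel_right, mem_mixedCone_iff hBA]
  intro u hu
  rw [inner_neg_left, Submodule.inner_right_of_mem_orthogonal hs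
    (mem_orthogonal_span_image_iff.2 (hlin u hu)), neg_zero]

theorem mem_reflectedCell_self_of_halfspace (hBA : B ⊆ A) (hpK : p ∈ (spine y A B)ᗮ)
    (hdec : ∀ z ∈ solutionSet y 0 A B, ∃ a ∈ (Submodule.span ℝ (y '' A))ᗮ, ∃ r : ℝ, 0 ≤ r ∧
      z = a + r • p)
    (hx : x - p ∈ spine y A B) : x ∈ reflectedCell y 0 A B A := by
  obtain ⟨a, ha, s, hs, has⟩ := Submodule.mem_sup.1 hx
  obtain rfl : a + s + p = x := by rw [has, sub_add_cancel]
  refine mem_reflectedCell.2 ⟨a, mem_solutionSet_zero_of_mem_orthogonal subset_rfl ha, ?_⟩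
  rw [mem_mixedCone_iff hBA]
  intro w hw
  have hws := Submodule.inner_right_of_mem_orthogonal hs (mem_orthogonal_span_image_iff.2 hw.2)
  obtain ⟨a', ha', r, hr, rfl⟩ := hdec w hw
  have hpa := Submodule.inner_left_of_mem_orthogonal (Submodule.mem_sup_left ha') hpK
  have : a - (a + s + p) = -s - p := by abel
  rw [this, inner_sub_left, inner_neg_left, hws, inner_add_right, hpa, real_inner_smul_right]
  linarith [mul_nonneg hr (real_inner_self_nonneg (x := p))]

/-- The cone here is a half-space of its span: its only faces are the lineality space and the cone
itself. -/
theorem mem_reflectedCell_of_halfspace (hBA : B ⊆ A) (hp : p ∈ solutionSet y 0 A B)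
    (hpK : p ∈ (spine y A B)ᗮ)
    (hdec : ∀ z ∈ solutionSet y 0 A B, ∃ a ∈ (Submodule.span ℝ (y '' A))ᗮ, ∃ r : ℝ, 0 ≤ r ∧
      z = a + r • p)
    (hx : x - p ∈ spine y A B) (hJ : J ∈ activeSets y 0 A B) : x ∈ reflectedCell y 0 A B J := by
  have hBJ := superset_of_mem_activeSets hBA hJ
  obtain ⟨z, hz, hzJ⟩ := hJ
  obtain ⟨a', ha', r, hr, rfl⟩ := hdec z hz
  rcases hr.eq_or_lt with rfl | hr
  · obtain rfl : A = J := by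
      rw [← hzJ]
      exact (Finset.filter_true_of_mem fun i hi => by
        rw [inner_add_smul_of_mem_orthogonal ha' hi, zero_mul, Pi.zero_apply]).symm
    exact mem_reflectedCell_self_of_halfspace hBA hpK hdec hx
  · obtain ⟨a, ha, s, hs, has⟩ := Submodule.mem_sup.1 hx
    have ha₀ := mem_orthogonal_span_image_iff.1 ha
    refine mem_reflectedCell.2 ⟨a + p, ⟨fun i hi => ?_, fun i hi => ?_⟩, ?_⟩
    · rw [inner_add_right, ha₀ i hi, zero_add]
      exact hp.1 i hi
    · obtain ⟨hiA, hi₀⟩ := mem_activeSet.1 (hzJ ▸ hi)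
      rw [inner_add_smul_of_mem_orthogonal ha' hiA] at hi₀
      rw [inner_add_right, ha₀ i hiA, zero_add]
      exact (mul_eq_zero.1 hi₀).resolve_left hr.ne'
    · have : a + p - x = -s := by
        rw [← sub_add_cancel x p, ← has]
        abel
      rw [this]
      exact neg_mem_mixedCone_of_mem_span hBJ hs

theorem mem_reflectedCell_of_add_smul_mem_spine [FiniteDimensional ℝ V] (hBA : B ⊆ A)
    (hu : u ∈ solutionSet y 0 A B) (hbA : b ∈ A) (hbu : ⟪y b, u⟫ < 0) (hx : x ∉ spine y A B)
    {t : ℝ} (ht : 0 ≤ t) (hxt : x + t • y b ∈ spine y A B)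
    (htop : spine y A B ⊔ Submodule.span ℝ {y b} = ⊤) (hJ : J ∈ activeSets y 0 A B) :
    x ∈ reflectedCell y 0 A B J := by
  obtain ⟨k, hk, p, hp, rfl⟩ := (spine y A B).exists_add_mem_mem_orthogonal x
  have hp₀ : p ≠ 0 := by
    rintro rfl
    exact hx (by simpa using hk)
  have hpt : t * ⟪y b, p⟫ = -⟪p, p⟫ := by
    have := Submodule.inner_right_of_mem_orthogonal hxt hp
    rw [inner_add_left, inner_add_left, Submodule.inner_right_of_mem_orthogonal hk hp,
      real_inner_smul_left] at this
    linarith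
  have hneg : t * ⟪y b, p⟫ < 0 := hpt ▸ neg_neg_of_pos (real_inner_self_pos.2 hp₀)
  have hbp : ⟪y b, p⟫ < 0 := neg_of_mul_neg_right hneg ht
  have ht₀ : t ≠ 0 := by
    rintro rfl
    simp at hneg
  have htop' : spine y A B ⊔ Submodule.span ℝ {p} = ⊤ := by
    refine eq_top_iff.2 (htop ▸ sup_le le_sup_left ((Submodule.span_singleton_le_iff_mem _ _).2 ?_))
    refine (Submodule.smul_mem_iff _ ht₀).1 ?_
    have : t • y b = k + p + t • y b - k - p := by abel
    rw [this]
    exact sub_mem (Submodule.mem_sup_left (sub_mem hxt hk))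
      (Submodule.mem_sup_right (Submodule.mem_span_singleton_self p))
  exact mem_reflectedCell_of_halfspace hBA
    (mem_solutionSet_zero_of_spine_sup_eq_top hBA hp htop' hbA hbp hu hbu) hp
    (fun z hz => exists_nonneg_eq_add_smul hBA hp htop' hbA hbp hz) (by simpa using hk) hJ

/-- Rays in the direction `y b` that miss the spine give the value zero. If the spine together
with `y b` is not everything, then a generic perturbation of `x` moves its ray off the spine. -/
theorem cellSum_zero_eq_zero [FiniteDimensional ℝ V] (hBA : B ⊆ A)
    (hu : u ∈ solutionSet y 0 A B) (hbA : b ∈ A) (hbu : ⟪y b, u⟫ < 0)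
    (hloc : ∀ x ∉ spine y A B, ∀ v, ∀ᶠ e : ℝ in 𝓝[>] 0,
      cellSum y 0 A B (x + e • v) = cellSum y 0 A B x) (x : V) : cellSum y 0 A B x = 0 := by
  have heuler (x : V) (h : ∀ J ∈ activeSets y 0 A B, x ∈ reflectedCell y 0 A B J) :
      cellSum y 0 A B x = 0 :=
    (cellSum_eq_sum_activeSets h).trans (sum_activeSets_eq_zero hBA hu hbA hbu)
  have hray (x : V) (h : ∀ t : ℝ, 0 ≤ t → x + t • y b ∉ spine y A B) : cellSum y 0 A B x = 0 :=
    cellSum_eq_zero_of_eventually_eq hBA hu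
      (fun g hg => real_inner_comm g (y b) ▸ hg.1 b hbA) (real_inner_comm u (y b) ▸ hbu)
      fun t ht => hloc _ (h t ht)
  by_cases hx : x ∈ spine y A B
  · exact heuler x fun J => mem_reflectedCell_of_mem_spine hBA hx
  by_cases hmiss : ∀ t : ℝ, 0 ≤ t → x + t • y b ∉ spine y A B
  · exact hray x hmiss
  push Not at hmiss
  obtain ⟨t, ht, hxt⟩ := hmiss
  by_cases htop : spine y A B ⊔ Submodule.span ℝ {y b} = ⊤
  · exact heuler x fun J => mem_reflectedCell_of_add_smul_mem_spine hBA hu hbA hbu hx ht hxt htop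
  obtain ⟨w, hw⟩ : ∃ w, w ∉ spine y A B ⊔ Submodule.span ℝ {y b} := by
    simpa [Submodule.eq_top_iff'] using htop
  obtain ⟨e, he, hpos⟩ := ((hloc x hx w).and self_mem_nhdsWithin).exists
  rw [← he]
  refine hray _ fun r _ hr => hw ((Submodule.smul_mem_iff _ (ne_of_gt hpos)).1 ?_)
  have : e • w = (x + e • w + r • y b) - (x + t • y b) + (t - r) • y b := by module
  rw [this]
  exact add_mem (Submodule.mem_sup_left (sub_mem hr hxt))
    (Submodule.mem_sup_right (Submodule.smul_mem _ _ (Submodule.mem_span_singleton_self _)))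

theorem card_activeSet_sdiff_lockedSet_lt (hBA : B ⊆ A) (hn : n ∈ solutionSet y 0 A B)
    (hl : IsMultiplier y B (activeSet y 0 A n) (n - x) l) (hx : x ∉ spine y A B) :
    (activeSet y 0 A n \ lockedSet B l).card < (A \ B).card := by
  refine Finset.card_lt_card ((Finset.sdiff_subset_sdiff activeSet_subset
    subset_lockedSet).ssubset_of_ne fun heq => hx ?_)
  have hact : ∀ i ∈ A, ⟪y i, n⟫ = 0 := fun i hi => by
    by_cases hiB : i ∈ B
    · exact hn.2 i hiB
    · exact (mem_activeSet.1 (Finset.mem_sdiff.1 (heq ▸ Finset.mem_sdiff.2 ⟨hi, hiB⟩)).1).2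
  have hlB : lockedSet B l ⊆ B := fun j hj => by
    by_contra hjB
    have hjA : j ∈ A := activeSet_subset (lockedSet_subset_activeSet hBA hn hl hj)
    exact (Finset.mem_sdiff.1 (heq ▸ Finset.mem_sdiff.2 ⟨hjA, hjB⟩)).2 hj
  rw [← sub_sub_self n x]
  exact sub_mem (Submodule.mem_sup_left (mem_orthogonal_span_image_iff.2 hact))
    (Submodule.mem_sup_right (mixedCone_subset_span ⟨l, hl.of_lockedSet_subset hlB⟩))

theorem cellSum_zero_eq_cellSum_zero [FiniteDimensional ℝ V] (hBA : B ⊆ A) (x : V) :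
    cellSum y 0 A B x = cellSum y 0 A B 0 := by
  induction hN : (A \ B).card using Nat.strong_induction_on generalizing A B x with
  | _ N ih =>
    subst hN
    by_cases hlin : ∀ u ∈ solutionSet y 0 A B, ∀ i ∈ A, ⟪y i, u⟫ = 0
    · have hsum (x : V) := cellSum_eq_sum_activeSets (c := 0) fun J =>
        mem_reflectedCell_of_forall_inner_eq_zero hBA hlin x
      rw [hsum, hsum]
    push Not at hlin
    obtain ⟨u, hu, b, hbA, hbu⟩ := hlin
    have hzero := cellSum_zero_eq_zero hBA hu hbA ((hu.1 b hbA).lt_of_ne hbu) fun x hx =>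
      eventually_cellSum_eq hBA fun n hn l hl w => ih _
        (card_activeSet_sdiff_lockedSet_lt hBA hn hl hx)
        (lockedSet_subset_activeSet hBA hn hl) w rfl
    rw [hzero, hzero]

theorem cellSum_eq_zero [FiniteDimensional ℝ V] (hBA : B ⊆ A) (hu : u ∈ solutionSet y 0 A B)
    (hbA : b ∈ A) (hbu : ⟪y b, u⟫ < 0) (x : V) : cellSum y c A B x = 0 :=
  cellSum_eq_zero_of_eventually_eq hBA hu (fun g hg => real_inner_comm g (y b) ▸ hg.1 b hbA)
    (real_inner_comm u (y b) ▸ hbu) fun _ _ => eventually_cellSum_eq hBA fun _ hn _ hl =>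
      cellSum_zero_eq_cellSum_zero (lockedSet_subset_activeSet hBA hn hl)

end Cones

section Faces

variable {V : Type*} [NormedAddCommGroup V] [InnerProductSpace ℝ V] {ι : Type*}
  {y : ι → V} {c : ι → ℝ} {A B J : Finset ι} {F S : Set V} {n p u w z : V} {q : ℝ}

theorem mem_solutionSet_activeSet_iff :
    z ∈ solutionSet y c A (activeSet y c A w) ↔
      (∀ i ∈ A, ⟪y i, z⟫ ≤ c i) ∧ activeSet y c A w ⊆ activeSet y c A z :=
  and_congr_right fun _ => forall₂_congr fun _ hi => by
    rw [mem_activeSet, and_iff_right (activeSet_subset hi)]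

theorem injOn_solutionSet : InjOn (solutionSet y c A) (activeSets y c A B) := by
  rintro _ ⟨z, hz, rfl⟩ _ ⟨w, hw, rfl⟩ h
  refine Finset.Subset.antisymm (mem_solutionSet_activeSet_iff.1 (h ▸ ?_)).2
    (mem_solutionSet_activeSet_iff.1 (h ▸ ?_)).2
  exacts [mem_solutionSet_activeSet hw, mem_solutionSet_activeSet hz]

theorem exists_forall_activeSet_subset (hS : Convex ℝ S) (hne : S.Nonempty)
    (hSA : S ⊆ solutionSet y c A B) :
    ∃ n ∈ S, ∀ z ∈ S, activeSet y c A n ⊆ activeSet y c A z := by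
  obtain ⟨n, hn, hmin⟩ := WellFounded.has_min (measure fun z => (activeSet y c A z).card).wf S hne
  refine ⟨n, hn, fun z hz => ?_⟩
  have hmid (i : ι) : ⟪y i, midpoint ℝ n z⟫ = (⟪y i, n⟫ + ⟪y i, z⟫) / 2 := by
    rw [midpoint_eq_smul_add, real_inner_smul_right, inner_add_right, invOf_eq_inv]
    ring
  have hmem {i : ι} (hi : i ∈ activeSet y c A (midpoint ℝ n z)) :
      i ∈ activeSet y c A n ∧ i ∈ activeSet y c A z := by
    simp only [mem_activeSet, hmid] at hi ⊢
    have hin := (hSA hn).1 i hi.1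
    have hiz := (hSA hz).1 i hi.1
    exact ⟨⟨hi.1, by linarith⟩, hi.1, by linarith⟩
  have heq := Finset.eq_of_subset_of_card_le (fun i hi => (hmem hi).1)
    (not_lt.1 (hmin _ (hS.midpoint_mem hn hz)))
  exact heq ▸ fun i hi => (hmem hi).2

theorem sub_mem_solutionSet_zero (hBA : B ⊆ A) (hn : n ∈ solutionSet y c A B)
    (hw : w ∈ solutionSet y c A (activeSet y c A n)) :
    n - w ∈ solutionSet y 0 (activeSet y c A n) B := by
  have h := mem_orthogonal_span_image_iff.1 (sub_mem_orthogonal (mem_solutionSet_activeSet hn) hw)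
  exact ⟨fun i hi => (h i hi).le, fun i hi => h i (subset_activeSet hBA hn hi)⟩

/-- The segment from `w` to the relative interior point `n` can be prolonged beyond `n`. -/
theorem inner_eq_of_mem_solutionSet_activeSet (hBA : B ⊆ A)
    (hp : ∀ z ∈ solutionSet y c A B, ⟪p, z⟫ ≤ q) (hn : n ∈ solutionSet y c A B)
    (hnq : ⟪p, n⟫ = q) (hw : w ∈ solutionSet y c A (activeSet y c A n)) : ⟪p, w⟫ = q := by
  refine (hp w ⟨hw.1, fun i hi => hw.2 i (subset_activeSet hBA hn hi)⟩).antisymm ?_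
  obtain ⟨e, he, hpos⟩ := ((eventually_add_smul_mem_solutionSet_iff hn (n - w)).and
    self_mem_nhdsWithin).exists
  have hle := hp _ (he.2 (sub_mem_solutionSet_zero hBA hn hw))
  rw [inner_add_right, hnq, real_inner_smul_right, inner_sub_right, hnq, add_le_iff_nonpos_right]
    at hle
  exact sub_nonpos.1 (nonpos_of_mul_nonpos_right hle hpos)

theorem exists_sep_inner_eq_eq_solutionSet (hBA : B ⊆ A)
    (hp : ∀ z ∈ solutionSet y c A B, ⟪p, z⟫ ≤ q)
    (hne : {z ∈ solutionSet y c A B | ⟪p, z⟫ = q}.Nonempty) :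
    ∃ J ∈ activeSets y c A B, solutionSet y c A J = {z ∈ solutionSet y c A B | ⟪p, z⟫ = q} := by
  have hconv : Convex ℝ {z ∈ solutionSet y c A B | ⟪p, z⟫ = q} :=
    convex_solutionSet.inter (convex_hyperplane (innerₗ V p).isLinear q)
  obtain ⟨n, ⟨hn, hnq⟩, hmin⟩ := exists_forall_activeSet_subset hconv hne (sep_subset _ _)
  refine ⟨_, activeSet_mem_activeSets hn, Subset.antisymm (fun w hw => ⟨?_, ?_⟩) fun z hz => ?_⟩
  · exact ⟨hw.1, fun i hi => hw.2 i (subset_activeSet hBA hn hi)⟩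
  · exact inner_eq_of_mem_solutionSet_activeSet hBA hp hn hnq hw
  · exact mem_solutionSet_activeSet_iff.2 ⟨hz.1.1, hmin z hz⟩

theorem inner_sum_le (hJA : J ⊆ A) (hz : z ∈ solutionSet y c A B) :
    ⟪∑ j ∈ J, y j, z⟫ ≤ ∑ j ∈ J, c j := by
  rw [sum_inner]
  exact Finset.sum_le_sum fun j hj => hz.1 j (hJA hj)

theorem solutionSet_eq_sep_inner_sum_eq (hBJ : B ⊆ J) (hJA : J ⊆ A) :
    solutionSet y c A J = {z ∈ solutionSet y c A B | ⟪∑ j ∈ J, y j, z⟫ = ∑ j ∈ J, c j} := by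
  ext z
  simp only [solutionSet, mem_ofPred_eq, and_assoc]
  refine and_congr_right fun hz => ?_
  rw [sum_inner, Finset.sum_eq_sum_iff_of_le fun j hj => hz j (hJA hj)]
  exact ⟨fun h => ⟨fun i hi => h i (hBJ hi), h⟩, And.right⟩

theorem direction_affineSpan_solutionSet (hJ : J ∈ activeSets y c A B) :
    (affineSpan ℝ (solutionSet y c A J)).direction = (Submodule.span ℝ (y '' J))ᗮ := by
  obtain ⟨n, hn, rfl⟩ := hJ
  have hn := mem_solutionSet_activeSet hn
  rw [direction_affineSpan]
  refine le_antisymm ?_ fun u hu => ?_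
  · rw [vectorSpan_def, Submodule.span_le]
    rintro _ ⟨f, hf, f', hf', rfl⟩
    exact sub_mem_orthogonal hf hf'
  · have hu₀ := mem_orthogonal_span_image_iff.1 hu
    obtain ⟨e, he, hpos⟩ := ((eventually_add_smul_mem_solutionSet_iff hn u).and
      self_mem_nhdsWithin).exists
    have := vsub_mem_vectorSpan ℝ (he.2 ⟨fun i hi => (hu₀ i hi).le, hu₀⟩) hn
    rw [vsub_eq_sub, add_sub_cancel_left] at this
    exact (Submodule.smul_mem_iff _ (ne_of_gt hpos)).1 this

theorem stratum_subset_intrinsicInterior :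
    stratum y c A B J ⊆ intrinsicInterior ℝ (solutionSet y c A J) := by
  intro n hn
  have hdir := direction_affineSpan_solutionSet ⟨n, hn⟩
  obtain ⟨hn, rfl⟩ := hn
  set J := activeSet y c A n
  have hnJ : n ∈ solutionSet y c A J := mem_solutionSet_activeSet hn
  have hnspan := subset_affineSpan ℝ _ hnJ
  refine mem_intrinsicInterior.2 ⟨⟨n, hnspan⟩, mem_interior.2
    ⟨⋂ i ∈ A \ J, {z | ⟪y i, (z : V)⟫ < c i}, fun z hz => ?_, ?_, ?_⟩, rfl⟩
  · have hJz (j : ι) (hj : j ∈ J) : ⟪y j, (z : V)⟫ = c j := by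
      have := mem_orthogonal_span_image_iff.1 (hdir ▸ AffineSubspace.vsub_mem_direction z.2 hnspan)
        j hj
      rwa [vsub_eq_sub, inner_sub_right, hnJ.2 j hj, sub_eq_zero] at this
    refine ⟨fun i hi => ?_, hJz⟩
    by_cases hiJ : i ∈ J
    · exact (hJz i hiJ).le
    · exact le_of_lt (mem_iInter₂.1 hz i (Finset.mem_sdiff.2 ⟨hi, hiJ⟩))
  · exact isOpen_biInter_finset fun i _ => isOpen_lt (by fun_prop) continuous_const
  · refine mem_iInter₂.2 fun i hi => ?_
    obtain ⟨hiA, hiJ⟩ := Finset.mem_sdiff.1 hi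
    exact (hn.1 i hiA).lt_of_ne fun h => hiJ (mem_activeSet.2 ⟨hiA, h⟩)

end Faces

section Polyhedra

variable {ι : Type*} {y : ι → E d} {c : ι → ℝ} {A B J : Finset ι} {P F : Set (E d)} {x : E d}

theorem isFaceOf_solutionSet_iff (hBA : B ⊆ A) (hne : F.Nonempty) :
    IsFaceOf (solutionSet y c A B) F ↔ ∃ J ∈ activeSets y c A B, solutionSet y c A J = F := by
  constructor
  · rintro (rfl | ⟨p, q, hp, rfl⟩)
    · have := exists_sep_inner_eq_eq_solutionSet (y := y) (c := c) (p := 0) (q := 0) hBA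
        (by simp) (by simpa using hne)
      simpa using this
    · exact exists_sep_inner_eq_eq_solutionSet hBA hp hne
  · rintro ⟨J, hJ, rfl⟩
    have hJA := subset_of_mem_activeSets hJ
    exact .inr ⟨_, _, fun z => inner_sum_le hJA,
      solutionSet_eq_sep_inner_sum_eq (superset_of_mem_activeSets hBA hJ) hJA⟩

theorem sdim_solutionSet (hJ : J ∈ activeSets y c A B) :
    sdim (solutionSet y c A J) = d - Set.finrank ℝ (y '' J) := by
  rw [sdim, direction_affineSpan_solutionSet hJ]
  refine Nat.eq_sub_of_add_eq' ((Submodule.finrank_add_finrank_orthogonal _).trans ?_)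
  exact finrank_euclideanSpace_fin

theorem facesOfDim_solutionSet (hBA : B ⊆ A) (k : ℕ) :
    facesOfDim (solutionSet y c A B) k =
      solutionSet y c A '' {J ∈ activeSets y c A B | d - Set.finrank ℝ (y '' J) = k} := by
  ext F
  constructor
  · rintro ⟨hF, hne, rfl⟩
    obtain ⟨J, hJ, rfl⟩ := (isFaceOf_solutionSet_iff hBA hne).1 hF
    exact ⟨J, ⟨hJ, (sdim_solutionSet hJ).symm⟩, rfl⟩
  · rintro ⟨J, ⟨hJ, rfl⟩, rfl⟩
    have hne : (solutionSet y c A J).Nonempty :=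
      hJ.elim fun z hz => ⟨z, hz.2 ▸ mem_solutionSet_activeSet hz.1⟩
    exact ⟨(isFaceOf_solutionSet_iff hBA hne).2 ⟨J, hJ, rfl⟩, hne, sdim_solutionSet hJ⟩

theorem IsPolyhedron.exists_eq_solutionSet (hP : IsPolyhedron P) :
    ∃ (m : ℕ) (y : Fin m → E d) (c : Fin m → ℝ), P = solutionSet y c Finset.univ ∅ := by
  obtain ⟨m, y, c, rfl⟩ := hP
  exact ⟨m, y, c, by simp [solutionSet, real_inner_comm]⟩

variable [Fintype ι]

theorem normalCone_solutionSet (hBA : B ⊆ A) (hJ : J ∈ activeSets y c A B) :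
    normalCone (solutionSet y c A B) (solutionSet y c A J) = mixedCone y B J := by
  ext q
  rw [mem_mixedCone_iff (superset_of_mem_activeSets hBA hJ)]
  constructor
  · intro h u hu
    obtain ⟨n, hn⟩ := hJ
    have hev := eventually_add_smul_mem_solutionSet_iff hn.1 u
    obtain ⟨e, he, hpos⟩ := (hev.and self_mem_nhdsWithin).exists
    exact h n (stratum_subset_intrinsicInterior hn) u ⟨e, hpos, he.2 (hn.2 ▸ hu)⟩
  · rintro h f hf u ⟨e, hpos, he⟩
    have hf := intrinsicInterior_subset hf
    have hBJ := superset_of_mem_activeSets hBA hJ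
    refine h u ⟨fun i hi => ?_, fun i hi => ?_⟩
    · have := he.1 i (subset_of_mem_activeSets hJ hi)
      rw [inner_add_right, hf.2 i hi, real_inner_smul_right, add_le_iff_nonpos_right] at this
      exact nonpos_of_mul_nonpos_right this hpos
    · have := he.2 i hi
      rw [inner_add_right, hf.2 i (hBJ hi), real_inner_smul_right, add_eq_left] at this
      exact (mul_eq_zero.1 this).resolve_left hpos.ne'

theorem ncard_facesOfDim_solutionSet (hBA : B ⊆ A) (k : ℕ) :
    Set.ncard {F | F ∈ facesOfDim (solutionSet y c A B) k ∧
        x ∈ F - normalCone (solutionSet y c A B) F} =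
      Finset.card {J | (J ∈ activeSets y c A B ∧ x ∈ reflectedCell y c A B J) ∧
        d - Set.finrank ℝ (y '' J) = k} := by
  rw [← Set.ncard_coe_finset, ← InjOn.ncard_image
    (injOn_solutionSet.mono fun J hJ => (Finset.mem_filter.1 hJ).2.1.1)]
  congr 1
  ext F
  simp only [facesOfDim_solutionSet hBA, mem_ofPred_eq, mem_image, Finset.coe_filter,
    Finset.mem_univ, true_and]
  constructor
  · rintro ⟨⟨J, ⟨hJ, hk⟩, rfl⟩, hx⟩
    rw [normalCone_solutionSet hBA hJ] at hx
    exact ⟨J, ⟨⟨hJ, hx⟩, hk⟩, rfl⟩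
  · rintro ⟨J, ⟨⟨hJ, hx⟩, hk⟩, rfl⟩
    refine ⟨⟨J, ⟨hJ, hk⟩, rfl⟩, ?_⟩
    rwa [normalCone_solutionSet hBA hJ]

theorem sum_ncard_facesOfDim_solutionSet (hBA : B ⊆ A) (x : E d) :
    ∑ k ∈ Finset.range (d + 1), (-1 : ℤ) ^ k *
        (Set.ncard {F | F ∈ facesOfDim (solutionSet y c A B) k ∧
          x ∈ F - normalCone (solutionSet y c A B) F} : ℤ) =
      (-1) ^ d * cellSum y c A B x := by
  have hle (J : Finset ι) : Set.finrank ℝ (y '' J) ≤ d :=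
    (Submodule.finrank_le _).trans_eq finrank_euclideanSpace_fin
  have hsign {r : ℕ} (hr : r ≤ d) : (-1 : ℤ) ^ d * (-1) ^ r = (-1) ^ (d - r) := by
    conv_lhs => rw [← Nat.sub_add_cancel hr, pow_add, mul_assoc, ← mul_pow]
    simp
  rw [cellSum, Finset.mul_sum, ← Finset.sum_fiberwise_of_maps_to (t := Finset.range (d + 1))
    (g := fun J : Finset ι => d - Set.finrank ℝ (y '' J)) fun J _ => by simp]
  refine Finset.sum_congr rfl fun k _ => ?_
  rw [ncard_facesOfDim_solutionSet hBA, Finset.filter_filter, mul_comm, ← nsmul_eq_mul,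
    ← Finset.sum_const]
  refine Finset.sum_congr rfl fun J hJ => ?_
  rw [hsign (hle J), (Finset.mem_filter.1 hJ).2.2]

theorem stmt13_general {d : ℕ} {P : Set (E d)} (hP : IsPolyhedron P) {a u : E d}
    (hray : ∀ t : ℝ, 0 ≤ t → a + t • u ∈ P) (hline : ¬ ∀ t : ℝ, a + t • u ∈ P) (x : E d) :
    ∑ k ∈ Finset.range (d + 1), (-1 : ℤ) ^ k *
        (Set.ncard {F : Set (E d) | F ∈ facesOfDim P k ∧ x ∈ F - normalCone P F} : ℤ)
      = 0 := by
  obtain ⟨m, y, c, rfl⟩ := hP.exists_eq_solutionSet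
  have hu := mem_solutionSet_zero_of_forall_add_smul_mem hray
  obtain ⟨b, hb⟩ : ∃ b, ⟪y b, u⟫ < 0 := by
    by_contra! hnonneg
    refine hline fun t => ⟨fun i hi => ?_, by simp⟩
    rw [inner_add_right, real_inner_smul_right, (hu.1 i hi).antisymm (hnonneg i), Pi.zero_apply,
      mul_zero, add_zero]
    simpa using (hray 0 le_rfl).1 i hi
  rw [sum_ncard_facesOfDim_solutionSet (Finset.empty_subset _),
    cellSum_eq_zero (Finset.empty_subset _) hu (Finset.mem_univ b) hb, mul_zero]

end Polyhedra
/-- for an unbounded line-free polyhedral set,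
`Σ_k (-1)^k Σ_{F ∈ F_k(P)} 1_{F - N_F(P)}(x) = 0` for all `x`. -/
theorem stmt13 {d : ℕ} {P : Set (E d)} (hP : IsPolyhedron P) (hne : P.Nonempty)
    (hub : ¬ Bornology.IsBounded P)
    (hlf : ¬ ∃ (a v : E d), v ≠ 0 ∧ ∀ t : ℝ, a + t • v ∈ P) (x : E d) :
    ∑ k ∈ Finset.range (d + 1), (-1 : ℤ) ^ k *
        (Set.ncard {F : Set (E d) | F ∈ facesOfDim P k ∧ x ∈ F - normalCone P F} : ℤ)
      = 0 := by
  obtain ⟨a, ha⟩ := hne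
  obtain ⟨u, hu, hray⟩ : ∃ u ≠ 0, ∀ p ∈ P, ∀ t : ℝ, 0 ≤ t → p + t • u ∈ P := by
    obtain ⟨m, y, c, rfl⟩ := hP.exists_eq_solutionSet
    exact exists_forall_add_smul_mem_of_not_isBounded convex_solutionSet isClosed_solutionSet hub
  exact stmt13_general hP (hray a ha) (fun hline => hlf ⟨a, u, hu, hline⟩) x
end
end

section
/- Let A be a finite reflection arrangement in ℝ^d associated with a finite reflection group W, and let C be a fixed closed chamber. Write χ_A(t) = Σ_k (−1)^{d−k} a_k t^k. Then for every x ∈ ℝ^d outside a finite union of hyperplanes, and every k ∈ {0,…,d}, the number of group elements g ∈ W with dim(gx, C) = k equals a_k. -/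
open scoped RealInnerProductSpace Pointwise Classical
open Set

noncomputable section

variable {d : ℕ}

/-- `g` is an orthogonal reflection: a linear isometry whose fixed-point set is
a linear hyperplane. -/
def IsReflection {d : ℕ} (g : (E d) ≃ₗᵢ[ℝ] (E d)) : Prop :=
  IsLinearHyperplane {x : E d | g x = x}

/-!
Since `W` acts simply transitively on the chambers of `A`, the elements `g ∈ W` with
`dim (g x, C) = k` correspond to the chambers `g⁻¹ C` onto which `x` projects in dimension `k`.
Chambers are counted by deletion and restriction: when a hyperplane `v^⊥` cuts a region of the
remaining arrangement in two, a generic `x` has the same projection dimension for the piece that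
contains its nearest point as for the whole region, and the same one for the other piece as for the
trace of the region on `v^⊥`. Whitney's sum satisfies the same recursion. To apply it to traces, the
count is made inside an arbitrary linear subspace `U`, and a choice of sides of the hyperplanes that
bounds an empty region counts as zero.
-/

section Reflections

variable {V : Type*} [NormedAddCommGroup V] [InnerProductSpace ℝ V]

/-- The orthogonal reflection in the hyperplane `v^⊥`. -/
def reflectionAlong (v : V) : V ≃ₗᵢ[ℝ] V := (ℝ ∙ v)ᗮ.reflection

lemma reflectionAlong_apply {v : V} (hv : ‖v‖ = 1) (z : V) :
    reflectionAlong v z = z - (2 * ⟪v, z⟫) • v := by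
  rw [reflectionAlong, Submodule.reflection_orthogonal_apply, Submodule.reflection_singleton_apply]
  simp [hv, two_mul, add_smul, two_smul]

lemma reflectionAlong_self (v : V) : reflectionAlong v v = -v :=
  Submodule.reflection_orthogonalComplement_singleton_eq_neg v

lemma reflectionAlong_eq_self_iff {v z : V} : reflectionAlong v z = z ↔ ⟪v, z⟫ = 0 :=
  (Submodule.reflection_eq_self_iff z).trans Submodule.mem_orthogonal_singleton_iff_inner_right

lemma eq_reflectionAlong {g : V ≃ₗᵢ[ℝ] V} {v : V} (hv : g v = -v)
    (hperp : ∀ z, ⟪v, z⟫ = 0 → g z = z) : g = reflectionAlong v := by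
  ext z
  obtain ⟨_, ha, b, hb, rfl⟩ := Submodule.exists_add_mem_mem_orthogonal (K := ℝ ∙ v) z
  obtain ⟨c, rfl⟩ := Submodule.mem_span_singleton.mp ha
  rw [Submodule.mem_orthogonal_singleton_iff_inner_right] at hb
  simp only [map_add, map_smul, hv, hperp b hb, reflectionAlong_self,
    reflectionAlong_eq_self_iff.mpr hb]

lemma reflectionAlong_smul (v : V) {c : ℝ} (hc : c ≠ 0) :
    reflectionAlong (c • v) = reflectionAlong v := by
  simp only [reflectionAlong, Submodule.span_singleton_smul_eq hc.isUnit]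

lemma reflectionAlong_neg (v : V) : reflectionAlong (-v) = reflectionAlong v :=
  neg_one_smul ℝ v ▸ reflectionAlong_smul v (neg_ne_zero.mpr one_ne_zero)

lemma reflectionAlong_mul_self (v : V) : reflectionAlong v * reflectionAlong v = 1 :=
  Submodule.reflection_mul_reflection _

lemma reflectionAlong_inv (v : V) : (reflectionAlong v)⁻¹ = reflectionAlong v :=
  Submodule.reflection_inv

lemma inner_map_right (g : V ≃ₗᵢ[ℝ] V) (u z : V) : ⟪u, g z⟫ = ⟪g⁻¹ u, z⟫ := by
  rw [← g.inner_map_map (g⁻¹ u) z]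
  exact congrArg (⟪·, g z⟫) (g.apply_symm_apply u).symm

lemma reflectionAlong_map (g : V ≃ₗᵢ[ℝ] V) {v : V} (hv : ‖v‖ = 1) :
    reflectionAlong (g v) = g * reflectionAlong v * g⁻¹ := by
  ext z
  have hgz : g (g⁻¹ z) = z := g.apply_symm_apply z
  have hin : ⟪g v, z⟫ = ⟪v, g⁻¹ z⟫ := by rw [← g.inner_map_map v, hgz]
  rw [reflectionAlong_apply ((g.norm_map v).trans hv), LinearIsometryEquiv.coe_mul,
    LinearIsometryEquiv.coe_mul, Function.comp_apply, Function.comp_apply,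
    reflectionAlong_apply hv, map_sub, map_smul, hgz, hin]

lemma eq_or_eq_neg_of_reflectionAlong_eq {u v : V} (hu : ‖u‖ = 1) (hv : ‖v‖ = 1)
    (h : reflectionAlong u = reflectionAlong v) : u = v ∨ u = -v := by
  have hvu : v = ⟪u, v⟫ • u := by
    have := reflectionAlong_self v
    rw [← h, reflectionAlong_apply hu, sub_eq_iff_eq_add, mul_smul, two_smul] at this
    linear_combination (norm := module) (1 / 2 : ℝ) • this
  have habs : |⟪u, v⟫| = 1 := by simpa [norm_smul, hu, hv] using (congrArg norm hvu).symm
  rcases abs_eq_abs.mp (habs.trans abs_one.symm) with h1 | h1 <;> rw [h1] at hvu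
  · exact .inl (by simpa using hvu.symm)
  · exact .inr (by simp [hvu])

/-- The root system of `W`, normalised to unit vectors: all unit normals of mirrors of `W`. -/
def unitRoots (W : Subgroup (V ≃ₗᵢ[ℝ] V)) : Set V := {v | ‖v‖ = 1 ∧ reflectionAlong v ∈ W}

/-- The positive roots with respect to a base point `p`, which is meant to be regular. -/
def posRoots (W : Subgroup (V ≃ₗᵢ[ℝ] V)) (p : V) : Set V := {v ∈ unitRoots W | 0 < ⟪v, p⟫}

/-- A point is regular for `W` if it lies on no mirror of `W`. -/
def IsRegularPoint (W : Subgroup (V ≃ₗᵢ[ℝ] V)) (p : V) : Prop := ∀ v ∈ unitRoots W, ⟪v, p⟫ ≠ 0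

variable {W : Subgroup (V ≃ₗᵢ[ℝ] V)} {p q : V} {Δ : Set V}

lemma neg_mem_unitRoots {v : V} (hv : v ∈ unitRoots W) : -v ∈ unitRoots W :=
  ⟨by rw [norm_neg, hv.1], by rw [reflectionAlong_neg]; exact hv.2⟩

lemma map_mem_unitRoots {g : V ≃ₗᵢ[ℝ] V} (hg : g ∈ W) {v : V} (hv : v ∈ unitRoots W) :
    g v ∈ unitRoots W :=
  ⟨by rw [g.norm_map, hv.1], by
    rw [reflectionAlong_map g hv.1]; exact W.mul_mem (W.mul_mem hg hv.2) (W.inv_mem hg)⟩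

lemma finite_unitRoots [Finite W] : (unitRoots W).Finite := by
  refine Set.Finite.of_finite_fibers reflectionAlong
    ((Set.toFinite (W : Set (V ≃ₗᵢ[ℝ] V))).subset (image_subset_iff.mpr fun v hv ↦ hv.2)) ?_
  rintro _ ⟨v, hv, rfl⟩
  exact (Set.toFinite {v, -v}).subset fun u hu ↦
    eq_or_eq_neg_of_reflectionAlong_eq hu.1.1 hv.1 hu.2

lemma finite_posRoots [Finite W] : (posRoots W p).Finite :=
  finite_unitRoots.subset (sep_subset _ _)

lemma IsRegularPoint.map (hp : IsRegularPoint W p) {g : V ≃ₗᵢ[ℝ] V} (hg : g ∈ W) :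
    IsRegularPoint W (g p) := fun v hv ↦ by
  rw [inner_map_right]
  exact hp _ (map_mem_unitRoots (W.inv_mem hg) hv)

lemma IsRegularPoint.mem_posRoots_or_neg_mem (hp : IsRegularPoint W p) {v : V}
    (hv : v ∈ unitRoots W) : v ∈ posRoots W p ∨ -v ∈ posRoots W p := by
  rcases (hp v hv).lt_or_gt with h | h
  · exact .inr ⟨neg_mem_unitRoots hv, by rw [inner_neg_left]; linarith⟩
  · exact .inl ⟨hv, h⟩

/-- Moving `p` by the group as close to `q` as possible brings it into the chamber of `q`. -/
lemma exists_mem_forall_inner_mul_inner_pos [Finite W] (hp : IsRegularPoint W p)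
    (hq : IsRegularPoint W q) :
    ∃ g ∈ W, ∀ v ∈ unitRoots W, 0 < ⟪v, q⟫ * ⟪v, g p⟫ := by
  obtain ⟨g, hg, hmax⟩ := (W : Set (V ≃ₗᵢ[ℝ] V)).exists_max_image (fun g ↦ ⟪q, g p⟫)
    (Set.toFinite _) ⟨1, W.one_mem⟩
  refine ⟨g, hg, fun v hv ↦
    (mul_ne_zero (hq v hv) (hp.map hg v hv)).symm.lt_of_le ?_⟩
  have h := hmax _ (W.mul_mem hv.2 hg)
  rw [LinearIsometryEquiv.coe_mul, Function.comp_apply, reflectionAlong_apply hv.1, inner_sub_right,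
    real_inner_smul_right, real_inner_comm v q] at h
  linarith

/-- A simple system of `W` with respect to a regular point `p`: positive roots whose cone contains
all positive roots and whose reflections permute the remaining positive roots. -/
structure IsSimpleSystem (W : Subgroup (V ≃ₗᵢ[ℝ] V)) (p : V) (Δ : Set V) : Prop where
  subset_posRoots : Δ ⊆ posRoots W p
  posRoots_subset_span : posRoots W p ⊆ Submodule.span NNReal Δ
  reflectionAlong_mem : ∀ v ∈ Δ, ∀ u ∈ posRoots W p, u ≠ v → reflectionAlong v u ∈ posRoots W p

lemma eq_zero_or_inner_pos_of_mem_span (hΔ : ∀ v ∈ Δ, 0 < ⟪v, p⟫) {y : V}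
    (hy : y ∈ Submodule.span NNReal Δ) : y = 0 ∨ 0 < ⟪y, p⟫ := by
  induction hy using Submodule.span_induction with
  | mem v hv => exact .inr (hΔ v hv)
  | zero => exact .inl rfl
  | add a b _ _ ha hb =>
    rcases ha with rfl | ha
    · simpa using hb
    · rcases hb with rfl | hb
      · simpa using Or.inr ha
      · exact .inr (by rw [inner_add_left]; exact add_pos ha hb)
  | smul c a _ ha =>
    rcases eq_or_ne c 0 with rfl | hc
    · simp
    · refine ha.imp (by rintro rfl; simp) fun ha ↦ ?_
      rw [NNReal.smul_def, real_inner_smul_left]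
      exact mul_pos (NNReal.coe_pos.mpr hc.bot_lt) ha

lemma reflectionAlong_mem_posRoots_of_notMem_span (hp : IsRegularPoint W p)
    (hΔ : Δ ⊆ posRoots W p) (hspan : posRoots W p ⊆ Submodule.span NNReal Δ) {u v : V}
    (hv : v ∈ Δ) (hmin : v ∉ Submodule.span NNReal (Δ \ {v})) (hu : u ∈ posRoots W p)
    (huv : u ≠ v) : reflectionAlong v u ∈ posRoots W p := by
  have hv1 := (hΔ hv).1
  refine (hp.mem_posRoots_or_neg_mem (map_mem_unitRoots hv1.2 hu.1)).resolve_right fun hu' ↦ ?_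
  have decompose : ∀ w ∈ posRoots W p, ∃ a : NNReal, ∃ y ∈ Submodule.span NNReal (Δ \ {v}),
      w = a • v + y := fun w hw ↦ by
    have := hspan hw
    rwa [← insert_sdiff_self_of_mem hv, SetLike.mem_coe, Submodule.mem_span_insert] at this
  obtain ⟨a, y, hy, hay⟩ := decompose u hu
  obtain ⟨a', y', hy', hay'⟩ := decompose _ hu'
  have hsum : (2 * ⟪v, u⟫ - a - a') • v = y + y' := by
    rw [reflectionAlong_apply hv1.1] at hay'
    rw [NNReal.smul_def] at hay hay'
    linear_combination (norm := module) hay + hay'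
  rcases lt_or_ge 0 (2 * ⟪v, u⟫ - a - a') with hc | hc
  · apply hmin
    have : v = (2 * ⟪v, u⟫ - a - a').toNNReal⁻¹ • (y + y') := by
      rw [← hsum, NNReal.smul_def, NNReal.coe_inv, Real.coe_toNNReal _ hc.le,
        inv_smul_smul₀ hc.ne']
    have hmem := Submodule.smul_mem _ (2 * ⟪v, u⟫ - a - a').toNNReal⁻¹
      (Submodule.add_mem _ hy hy')
    rwa [← this] at hmem
  · have hpos : ∀ w ∈ Δ \ {v}, 0 < ⟪w, p⟫ := fun w hw ↦ (hΔ hw.1).2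
    have hle : ⟪y, p⟫ + ⟪y', p⟫ ≤ 0 := by
      rw [← inner_add_left, ← hsum, real_inner_smul_left]
      exact mul_nonpos_of_nonpos_of_nonneg hc (hΔ hv).2.le
    have hy'p : 0 ≤ ⟪y', p⟫ :=
      (eq_zero_or_inner_pos_of_mem_span hpos hy').elim (by rintro rfl; simp) le_of_lt
    obtain rfl : y = 0 :=
      (eq_zero_or_inner_pos_of_mem_span hpos hy).resolve_right (by linarith)
    have ha : (a : ℝ) = 1 := by
      simpa [NNReal.smul_def, norm_smul, hv1.1, hu.1.1] using (congrArg norm hay).symm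
    exact huv (by simpa [NNReal.smul_def, ha] using hay)

lemma exists_isSimpleSystem [Finite W] (hp : IsRegularPoint W p) :
    ∃ Δ, IsSimpleSystem W p Δ := by
  obtain ⟨Δ, ⟨hΔ, hspan⟩, hmin⟩ :=
    (finite_posRoots.finite_subsets.subset fun Δ (h : Δ ⊆ posRoots W p ∧
      posRoots W p ⊆ Submodule.span NNReal Δ) ↦ h.1).exists_minimal
      ⟨posRoots W p, Subset.rfl, Submodule.subset_span⟩
  refine ⟨Δ, hΔ, hspan, fun v hv u hu huv ↦
    reflectionAlong_mem_posRoots_of_notMem_span hp hΔ hspan hv (fun hvmem ↦ ?_) hu huv⟩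
  have hle : Submodule.span NNReal Δ ≤ Submodule.span NNReal (Δ \ {v}) := by
    rw [← insert_sdiff_self_of_mem hv, Submodule.span_insert_eq_span hvmem,
      insert_sdiff_self_of_mem hv]
  exact (hmin ⟨sdiff_subset.trans hΔ, hspan.trans hle⟩ sdiff_subset hv).2 rfl

lemma IsSimpleSystem.exists_inner_pos (h : IsSimpleSystem W p Δ) {u : V} (hu : u ∈ posRoots W p) :
    ∃ v ∈ Δ, 0 < ⟪v, u⟫ := by
  by_contra! hle
  have hspan : ∀ y ∈ Submodule.span NNReal Δ, ⟪y, u⟫ ≤ 0 := fun y hy ↦ by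
    induction hy using Submodule.span_induction with
    | mem v hv => exact hle v hv
    | zero => simp
    | add a b _ _ ha hb => rw [inner_add_left]; exact add_nonpos ha hb
    | smul c a _ ha =>
      rw [NNReal.smul_def, real_inner_smul_left]
      exact mul_nonpos_of_nonneg_of_nonpos c.2 ha
  have := hspan u (h.posRoots_subset_span hu)
  rw [real_inner_self_eq_norm_sq, hu.1.1] at this
  norm_num at this

/-- A positive root of minimal height in the orbit of `v` under the simple reflections is simple,
since otherwise some simple reflection would lower its height. -/
lemma IsSimpleSystem.reflectionAlong_mem_closure [Finite W] (h : IsSimpleSystem W p Δ)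
    {v : V} (hv : v ∈ posRoots W p) :
    reflectionAlong v ∈ Subgroup.closure (reflectionAlong '' Δ) := by
  set S := Subgroup.closure (reflectionAlong '' Δ)
  obtain ⟨u, ⟨hu, g, hg, rfl⟩, hmin⟩ :=
    {u | u ∈ posRoots W p ∧ ∃ g ∈ S, g v = u}.exists_min_image (fun u ↦ ⟪u, p⟫)
      (finite_unitRoots.subset fun u hu ↦ hu.1.1) ⟨v, hv, 1, S.one_mem, rfl⟩
  obtain ⟨α, hα, hαpos⟩ := h.exists_inner_pos hu
  have hαS : reflectionAlong α ∈ S := Subgroup.subset_closure (mem_image_of_mem _ hα)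
  obtain rfl : g v = α := by
    by_contra hne
    have hle := hmin _ ⟨h.reflectionAlong_mem α hα _ hu hne, _, S.mul_mem hαS hg, rfl⟩
    rw [reflectionAlong_apply (h.subset_posRoots hα).1.1, inner_sub_left,
      real_inner_smul_left] at hle
    nlinarith [mul_pos hαpos (h.subset_posRoots hα).2]
  rw [reflectionAlong_map g hv.1.1] at hαS
  simpa [mul_assoc] using S.mul_mem (S.mul_mem (S.inv_mem hg) hαS) hg

lemma IsSimpleSystem.closure_eq [Finite W] (hp : IsRegularPoint W p) (h : IsSimpleSystem W p Δ)
    (hW : Subgroup.closure (reflectionAlong '' unitRoots W) = W) :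
    Subgroup.closure (reflectionAlong '' Δ) = W := by
  refine le_antisymm ((Subgroup.closure_le _).mpr
    (image_subset_iff.mpr fun v hv ↦ (h.subset_posRoots hv).1.2)) ?_
  conv_lhs => rw [← hW]
  refine (Subgroup.closure_le _).mpr (image_subset_iff.mpr fun v hv ↦ ?_)
  rcases hp.mem_posRoots_or_neg_mem hv with hv | hv
  · exact h.reflectionAlong_mem_closure hv
  · simpa only [mem_preimage, SetLike.mem_coe, reflectionAlong_neg]
      using h.reflectionAlong_mem_closure hv

/-- The product of the reflections in a list of vectors. -/
def reflectionWord (L : List V) : V ≃ₗᵢ[ℝ] V := (L.map reflectionAlong).prod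

lemma reflectionWord_cons (v : V) (L : List V) :
    reflectionWord (v :: L) = reflectionAlong v * reflectionWord L := by
  simp only [reflectionWord, List.map_cons, List.prod_cons]

lemma exists_reflectionWord_of_mem_closure {g : V ≃ₗᵢ[ℝ] V}
    (hg : g ∈ Subgroup.closure (reflectionAlong '' Δ)) :
    ∃ L : List V, (∀ v ∈ L, v ∈ Δ) ∧ reflectionWord L = g := by
  induction hg using Subgroup.closure_induction_left with
  | one => exact ⟨[], by simp, rfl⟩
  | mul_left r hr g _ ih =>
    obtain ⟨v, hv, rfl⟩ := hr
    obtain ⟨L, hL, rfl⟩ := ih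
    exact ⟨v :: L, List.forall_mem_cons.mpr ⟨hv, hL⟩, reflectionWord_cons v L⟩
  | inv_mul_cancel r hr g _ ih =>
    obtain ⟨v, hv, rfl⟩ := hr
    obtain ⟨L, hL, rfl⟩ := ih
    exact ⟨v :: L, List.forall_mem_cons.mpr ⟨hv, hL⟩, by
      rw [reflectionWord_cons, reflectionAlong_inv]⟩

lemma IsSimpleSystem.exchange (h : IsSimpleSystem W p Δ) (L : List V) (hL : ∀ v ∈ L, v ∈ Δ)
    {u : V} (hu : u ∈ posRoots W p) (hneg : ⟪u, reflectionWord L p⟫ < 0) :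
    ∃ L' : List V, L'.length < L.length ∧ (∀ v ∈ L', v ∈ Δ) ∧
      reflectionAlong u * reflectionWord L = reflectionWord L' := by
  induction L generalizing u with
  | nil => exact absurd hneg hu.2.le.not_gt
  | cons v L ih =>
    obtain ⟨hv, hLs⟩ := List.forall_mem_cons.mp hL
    rw [reflectionWord_cons] at hneg ⊢
    rcases eq_or_ne u v with rfl | huv
    · exact ⟨L, L.length.lt_succ_self, hLs, by rw [← mul_assoc, reflectionAlong_mul_self, one_mul]⟩
    · rw [LinearIsometryEquiv.coe_mul, Function.comp_apply, inner_map_right,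
        reflectionAlong_inv] at hneg
      obtain ⟨L', hlen, hL', hprod⟩ := ih hLs (h.reflectionAlong_mem v hv u hu huv) hneg
      refine ⟨v :: L', by simpa using hlen, List.forall_mem_cons.mpr ⟨hv, hL'⟩, ?_⟩
      rw [reflectionWord_cons, ← hprod, reflectionAlong_map _ hu.1.1, reflectionAlong_inv]
      simp only [← mul_assoc, reflectionAlong_mul_self, one_mul]

lemma IsSimpleSystem.reflectionWord_eq_one (h : IsSimpleSystem W p Δ) (L : List V)
    (hL : ∀ v ∈ L, v ∈ Δ) (hpos : ∀ v ∈ posRoots W p, 0 < ⟪v, reflectionWord L p⟫) :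
    reflectionWord L = 1 := by
  induction hn : L.length using Nat.strong_induction_on generalizing L with
  | _ n ih =>
    cases L with
    | nil => rfl
    | cons v L =>
      obtain ⟨hv, hL⟩ := List.forall_mem_cons.mp hL
      have hvL := hpos v (h.subset_posRoots hv)
      rw [reflectionWord_cons, LinearIsometryEquiv.coe_mul, Function.comp_apply, inner_map_right,
        reflectionAlong_inv, reflectionAlong_self, inner_neg_left, neg_pos] at hvL
      obtain ⟨L', hlen, hL', hprod⟩ := h.exchange L hL (h.subset_posRoots hv) hvL
      rw [reflectionWord_cons, hprod] at hpos ⊢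
      exact ih _ (by rw [← hn, List.length_cons]; lia) L' hL' hpos rfl

theorem eq_one_of_forall_posRoots_inner_pos [Finite W]
    (hW : Subgroup.closure (reflectionAlong '' unitRoots W) = W) (hp : IsRegularPoint W p)
    {g : V ≃ₗᵢ[ℝ] V} (hg : g ∈ W) (hpos : ∀ v ∈ posRoots W p, 0 < ⟪v, g p⟫) : g = 1 := by
  obtain ⟨Δ, hΔ⟩ := exists_isSimpleSystem hp
  rw [← hΔ.closure_eq hp hW] at hg
  obtain ⟨L, hL, rfl⟩ := exists_reflectionWord_of_mem_closure hg
  exact hΔ.reflectionWord_eq_one L hL hpos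

end Reflections

lemma isReflection_iff_exists_reflectionAlong {g : E d ≃ₗᵢ[ℝ] E d} :
    IsReflection g ↔ ∃ v, ‖v‖ = 1 ∧ reflectionAlong v = g := by
  constructor
  · rintro ⟨y, hy, hfix⟩
    have hfix : ∀ z, g z = z ↔ ⟪y, z⟫ = 0 := Set.ext_iff.mp hfix
    have hgy : g y ∈ (ℝ ∙ y)ᗮᗮ := fun z hz ↦ by
      rw [Submodule.mem_orthogonal_singleton_iff_inner_right] at hz
      rw [← (hfix z).mpr hz, g.inner_map_map, real_inner_comm, hz]
    rw [Submodule.orthogonal_orthogonal, Submodule.mem_span_singleton] at hgy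
    obtain ⟨c, hc⟩ := hgy
    have habs : |c| = 1 := by
      have := congrArg norm hc
      rw [g.norm_map, norm_smul] at this
      exact mul_right_cancel₀ (norm_ne_zero_iff.mpr hy) (this.trans (one_mul _).symm)
    have hneg : g y = -y := by
      rcases abs_eq_abs.mp (habs.trans abs_one.symm) with rfl | rfl
      · exact absurd ((hfix y).mp (by rw [← hc, one_smul])) (inner_self_ne_zero.mpr hy)
      · rw [← hc, neg_one_smul]
    exact ⟨‖y‖⁻¹ • y, norm_smul_inv_norm hy, by
      rw [reflectionAlong_smul y (inv_ne_zero (norm_ne_zero_iff.mpr hy)),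
        eq_reflectionAlong hneg fun z ↦ (hfix z).mpr]⟩
  · rintro ⟨v, hv, rfl⟩
    exact ⟨v, norm_ne_zero_iff.mp (hv ▸ one_ne_zero), Set.ext fun z ↦ reflectionAlong_eq_self_iff⟩

section Regions

variable {V : Type*} [NormedAddCommGroup V] [InnerProductSpace ℝ V]

/-- The flat cut out by the hyperplanes with normal vectors in `B`. -/
def flatOf (B : Finset V) : Submodule ℝ V := ⨅ v ∈ B, (ℝ ∙ v)ᗮ

lemma mem_flatOf {B : Finset V} {z : V} : z ∈ flatOf B ↔ ∀ v ∈ B, ⟪v, z⟫ = 0 := by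
  simp only [flatOf, Submodule.mem_iInf, Submodule.mem_orthogonal_singleton_iff_inner_right]

/-- The relatively open region of `U` on the positive side of all hyperplanes with normals in `P`;
a region of a hyperplane arrangement is obtained by choosing a sign for each normal vector. -/
def openRegion (U : Submodule ℝ V) (P : Finset V) : Set V := {z | z ∈ U ∧ ∀ v ∈ P, 0 < ⟪v, z⟫}

/-- The closed counterpart of `openRegion`. -/
def closedRegion (U : Submodule ℝ V) (P : Finset V) : Set V := {z | z ∈ U ∧ ∀ v ∈ P, 0 ≤ ⟪v, z⟫}

/-- The linear span of the face of `closedRegion U P` through `y`, provided that `openRegion U P`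
is nonempty. -/
def faceSpan (U : Submodule ℝ V) (P : Finset V) (y : V) : Submodule ℝ V :=
  U ⊓ flatOf {v ∈ P | ⟪v, y⟫ = 0}

variable {U : Submodule ℝ V} {P : Finset V} {v y z l : V}

lemma mem_openRegion_inf_orthogonal :
    z ∈ openRegion (U ⊓ (ℝ ∙ v)ᗮ) P ↔ ⟪v, z⟫ = 0 ∧ z ∈ openRegion U P := by
  simp only [openRegion, Set.mem_ofPred_eq, Submodule.mem_inf,
    Submodule.mem_orthogonal_singleton_iff_inner_right, and_assoc, and_left_comm]

lemma mem_closedRegion_inf_orthogonal :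
    z ∈ closedRegion (U ⊓ (ℝ ∙ v)ᗮ) P ↔ ⟪v, z⟫ = 0 ∧ z ∈ closedRegion U P := by
  simp only [closedRegion, Set.mem_ofPred_eq, Submodule.mem_inf,
    Submodule.mem_orthogonal_singleton_iff_inner_right, and_assoc, and_left_comm]

lemma openRegion_subset_closedRegion : openRegion U P ⊆ closedRegion U P :=
  fun _ hz ↦ ⟨hz.1, fun v hv ↦ (hz.2 v hv).le⟩

lemma zero_mem_closedRegion : (0 : V) ∈ closedRegion U P :=
  ⟨U.zero_mem, fun v _ ↦ (inner_zero_right v).ge⟩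

lemma convex_openRegion : Convex ℝ (openRegion U P) := by
  refine U.convex.inter (convex_iff_forall_pos.mpr fun a ha b hb s t hs ht _ v hv ↦ ?_)
  rw [inner_add_right, real_inner_smul_right, real_inner_smul_right]
  exact add_pos (mul_pos hs (ha v hv)) (mul_pos ht (hb v hv))

lemma convex_closedRegion : Convex ℝ (closedRegion U P) := by
  refine U.convex.inter fun a ha b hb s t hs ht _ v hv ↦ ?_
  rw [inner_add_right, real_inner_smul_right, real_inner_smul_right]
  exact add_nonneg (mul_nonneg hs (ha v hv)) (mul_nonneg ht (hb v hv))

lemma isClosed_closedRegion [FiniteDimensional ℝ V] : IsClosed (closedRegion U P) := by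
  have hinter : closedRegion U P = ↑U ∩ ⋂ v ∈ P, {z | 0 ≤ ⟪v, z⟫} := by
    ext z
    simp [closedRegion]
  rw [hinter]
  exact U.closed_of_finiteDimensional.inter (isClosed_biInter fun v _ ↦
    isClosed_le continuous_const (continuous_const.inner continuous_id))

lemma eventually_inner_add_smul_pos (h : 0 < ⟪v, z⟫) (l : V) :
    ∀ᶠ t : ℝ in nhds 0, 0 < ⟪v, z + t • l⟫ := by
  have hcont : Continuous fun t : ℝ ↦ ⟪v, z + t • l⟫ := by fun_prop
  exact hcont.continuousAt.eventually_const_lt (by simpa using h)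

lemma eventually_add_smul_mem_openRegion (hz : z ∈ openRegion U P) (hl : l ∈ U) :
    ∀ᶠ t : ℝ in nhds 0, z + t • l ∈ openRegion U P := by
  filter_upwards [(Finset.eventually_all P).mpr fun v hv ↦
    eventually_inner_add_smul_pos (hz.2 v hv) l] with t ht
  exact ⟨U.add_mem hz.1 (U.smul_mem t hl), ht⟩

lemma eventually_add_smul_mem_closedRegion (hy : y ∈ closedRegion U P)
    (hl : l ∈ faceSpan U P y) : ∀ᶠ t : ℝ in nhds 0, y + t • l ∈ closedRegion U P := by
  have hmem : ∀ v ∈ P, ∀ᶠ t : ℝ in nhds 0, 0 ≤ ⟪v, y + t • l⟫ := fun v hv ↦ by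
    rcases (hy.2 v hv).eq_or_lt with h | h
    · have hvl : ⟪v, l⟫ = 0 := mem_flatOf.mp hl.2 v (Finset.mem_filter.mpr ⟨hv, h.symm⟩)
      exact .of_forall fun t ↦ by rw [inner_add_right, real_inner_smul_right, hvl, ← h]; simp
    · exact (eventually_inner_add_smul_pos h l).mono fun t ↦ le_of_lt
  filter_upwards [(Finset.eventually_all P).mpr hmem] with t ht
  exact ⟨U.add_mem hy.1 (U.smul_mem t hl.1), ht⟩

lemma self_mem_faceSpan (hy : y ∈ closedRegion U P) : y ∈ faceSpan U P y :=
  ⟨hy.1, mem_flatOf.mpr fun _ hv ↦ (Finset.mem_filter.mp hv).2⟩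

variable [DecidableEq V]

lemma flatOf_insert (v : V) (B : Finset V) : flatOf (insert v B) = (ℝ ∙ v)ᗮ ⊓ flatOf B :=
  Finset.iInf_insert v B _

lemma mem_openRegion_insert :
    z ∈ openRegion U (insert v P) ↔ 0 < ⟪v, z⟫ ∧ z ∈ openRegion U P := by
  simp only [openRegion, Set.mem_ofPred_eq, Finset.forall_mem_insert, and_left_comm]

lemma mem_closedRegion_insert :
    z ∈ closedRegion U (insert v P) ↔ 0 ≤ ⟪v, z⟫ ∧ z ∈ closedRegion U P := by
  simp only [closedRegion, Set.mem_ofPred_eq, Finset.forall_mem_insert, and_left_comm]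

lemma faceSpan_insert_of_ne (h : ⟪v, y⟫ ≠ 0) : faceSpan U (insert v P) y = faceSpan U P y := by
  rw [faceSpan, Finset.filter_insert, if_neg h, faceSpan]

lemma faceSpan_insert_of_eq (h : ⟪v, y⟫ = 0) :
    faceSpan U (insert v P) y = faceSpan (U ⊓ (ℝ ∙ v)ᗮ) P y := by
  rw [faceSpan, Finset.filter_insert, if_pos h, flatOf_insert, ← inf_assoc, faceSpan]

lemma openRegion_insert_nonempty_of_inner_pos (hO : (openRegion U P).Nonempty)
    (hy : y ∈ closedRegion U P) (hvy : 0 < ⟪v, y⟫) : (openRegion U (insert v P)).Nonempty := by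
  obtain ⟨o, ho⟩ := hO
  obtain ⟨t, hvt, ht⟩ := (((eventually_inner_add_smul_pos hvy o).filter_mono
    nhdsWithin_le_nhds).and self_mem_nhdsWithin : ∀ᶠ t in nhdsWithin (0 : ℝ) (Ioi 0), _).exists
  refine ⟨y + t • o, mem_openRegion_insert.mpr
    ⟨hvt, U.add_mem hy.1 (U.smul_mem t ho.1), fun w hw ↦ ?_⟩⟩
  rw [inner_add_right, real_inner_smul_right]
  exact add_pos_of_nonneg_of_pos (hy.2 w hw) (mul_pos ht (ho.2 w hw))

lemma openRegion_insert_nonempty_of_inner_eq_zero {o : V} (ho : o ∈ openRegion U P)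
    (hvo : ⟪v, o⟫ = 0) (hl : l ∈ U) (hvl : 0 < ⟪v, l⟫) :
    (openRegion U (insert v P)).Nonempty := by
  obtain ⟨t, hmem, ht⟩ := (((eventually_add_smul_mem_openRegion ho hl).filter_mono
    nhdsWithin_le_nhds).and self_mem_nhdsWithin : ∀ᶠ t in nhdsWithin (0 : ℝ) (Ioi 0), _).exists
  refine ⟨o + t • l, mem_openRegion_insert.mpr ⟨?_, hmem⟩⟩
  rw [inner_add_right, real_inner_smul_right, hvo, zero_add]
  exact mul_pos ht hvl

lemma openRegion_insert_neg_nonempty_iff (hpos : (openRegion U (insert v P)).Nonempty) :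
    (openRegion U (insert (-v) P)).Nonempty ↔ (openRegion (U ⊓ (ℝ ∙ v)ᗮ) P).Nonempty := by
  obtain ⟨a, ha⟩ := hpos
  obtain ⟨hva, ha⟩ := mem_openRegion_insert.mp ha
  constructor
  · rintro ⟨b, hb⟩
    obtain ⟨hvb, hb⟩ := mem_openRegion_insert.mp hb
    rw [inner_neg_left] at hvb
    refine ⟨(-⟪v, b⟫ / (⟪v, a⟫ - ⟪v, b⟫)) • a + (⟪v, a⟫ / (⟪v, a⟫ - ⟪v, b⟫)) • b,
      mem_openRegion_inf_orthogonal.mpr ⟨?_, convex_openRegion ha hb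
        (div_nonneg hvb.le (by linarith)) (div_nonneg hva.le (by linarith)) ?_⟩⟩
    · rw [inner_add_right, real_inner_smul_right, real_inner_smul_right]
      ring
    · have : ⟪v, a⟫ - ⟪v, b⟫ ≠ 0 := by linarith
      field_simp
      ring
  · rintro ⟨o, ho⟩
    obtain ⟨hvo, ho⟩ := mem_openRegion_inf_orthogonal.mp ho
    exact openRegion_insert_nonempty_of_inner_eq_zero ho (by simp [hvo]) (U.neg_mem ha.1)
      (by simpa using hva)

lemma openRegion_insert_nonempty_or (hO : (openRegion U P).Nonempty) (hU : ¬ U ≤ (ℝ ∙ v)ᗮ) :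
    (openRegion U (insert v P)).Nonempty ∨ (openRegion U (insert (-v) P)).Nonempty := by
  obtain ⟨o, ho⟩ := hO
  have insert_nonempty_of_pos :
      ∀ w, 0 < ⟪w, o⟫ → (openRegion U (insert w P)).Nonempty := fun w hw ↦
    ⟨o, mem_openRegion_insert.mpr ⟨hw, ho⟩⟩
  rcases lt_trichotomy ⟪v, o⟫ 0 with h | h | h
  · exact .inr (insert_nonempty_of_pos _ (by simpa using h))
  · obtain ⟨u, hu, hvu⟩ := SetLike.not_le_iff_exists.mp hU
    rw [Submodule.mem_orthogonal_singleton_iff_inner_right] at hvu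
    rcases lt_or_gt_of_ne hvu with hvu | hvu
    · exact .inr (openRegion_insert_nonempty_of_inner_eq_zero ho (by simp [h]) hu
        (by simpa using hvu))
    · exact .inl (openRegion_insert_nonempty_of_inner_eq_zero ho h hu hvu)
  · exact .inl (insert_nonempty_of_pos _ h)

end Regions

section NearestPoints

variable {P Q : Set (E d)} {x y y' : E d}

lemma IsNearestPt.mono (h : IsNearestPt P x y) (hQ : Q ⊆ P) (hy : y ∈ Q) : IsNearestPt Q x y :=
  ⟨hy, fun z hz ↦ h.2 z (hQ hz)⟩

lemma exists_isNearestPt (hP : IsClosed P) (hne : P.Nonempty) (x : E d) :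
    ∃ y, IsNearestPt P x y := by
  obtain ⟨y, hy, hdist⟩ := hP.exists_infDist_eq_dist hne x
  exact ⟨y, hy, fun z hz ↦ hdist ▸ Metric.infDist_le_dist_of_mem hz⟩

lemma IsNearestPt.inner_sub_le_zero (hP : Convex ℝ P) (h : IsNearestPt P x y) {z : E d}
    (hz : z ∈ P) : ⟪x - y, z - y⟫ ≤ 0 := by
  refine (norm_eq_iInf_iff_real_inner_le_zero hP h.1).mp (le_antisymm ?_ ?_) z hz
  · have : Nonempty P := ⟨⟨y, h.1⟩⟩
    exact le_ciInf fun w ↦ by simpa only [dist_eq_norm] using h.2 w w.2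
  · exact ciInf_le (f := fun w : P ↦ ‖x - w‖) ⟨0, by rintro _ ⟨w, rfl⟩; exact norm_nonneg _⟩
      ⟨y, h.1⟩

lemma IsNearestPt.eq (hP : Convex ℝ P) (h : IsNearestPt P x y) (h' : IsNearestPt P x y') :
    y = y' := by
  have h1 := h.inner_sub_le_zero hP h'.1
  have h2 := h'.inner_sub_le_zero hP h.1
  rw [← neg_sub y y', inner_neg_right] at h1
  have hinner : ⟪y - y', y - y'⟫ = ⟪x - y', y - y'⟫ - ⟪x - y, y - y'⟫ := by
    rw [← inner_sub_left, sub_sub_sub_cancel_left]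
  exact sub_eq_zero.mp (real_inner_self_nonpos.mp (by linarith))

/-- If the constraint were inactive at the new nearest point, that point would be a local, hence
global, minimum of the distance on `P`. -/
lemma IsNearestPt.inner_eq_zero_of_inner_nonpos (hP : Convex ℝ P) (h : IsNearestPt P x y) {v : E d}
    (hv : ⟪v, y⟫ ≤ 0) (h' : IsNearestPt {z | 0 ≤ ⟪v, z⟫ ∧ z ∈ P} x y') : ⟪v, y'⟫ = 0 := by
  by_contra hne
  have hpos : 0 < ⟪v, y'⟫ := (Ne.symm hne).lt_of_le h'.1.1
  have hlocal : IsLocalMinOn (dist x) P y' := by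
    have hcont : ContinuousAt (fun z ↦ ⟪v, z⟫) y' := by fun_prop
    have hev : ∀ᶠ z in nhdsWithin y' P, 0 < ⟪v, z⟫ :=
      hcont.continuousWithinAt.eventually_const_lt hpos
    filter_upwards [hev, self_mem_nhdsWithin] with z hvz hz
    exact h'.2 z ⟨hvz.le, hz⟩
  have hmin : IsNearestPt P x y' :=
    ⟨h'.1.2, IsMinOn.of_isLocalMinOn_of_convexOn h'.1.2 hlocal (by
      simpa only [dist_comm] using convexOn_dist x hP)⟩
  exact hpos.not_ge (h.eq hP hmin ▸ hv)

variable {U : Submodule ℝ (E d)} {S : Finset (E d)}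

lemma exists_isNearestPt_closedRegion (U : Submodule ℝ (E d)) (S : Finset (E d)) (x : E d) :
    ∃ y, IsNearestPt (closedRegion U S) x y :=
  exists_isNearestPt isClosed_closedRegion ⟨0, zero_mem_closedRegion⟩ x

lemma IsNearestPt.eq_starProjection_faceSpan (h : IsNearestPt (closedRegion U S) x y) :
    (faceSpan U S y).starProjection x = y := by
  refine Submodule.eq_starProjection_of_mem_of_inner_eq_zero (self_mem_faceSpan h.1) fun l hl ↦ ?_
  have hle : ∀ l ∈ faceSpan U S y, ⟪x - y, l⟫ ≤ 0 := fun l hl ↦ by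
    obtain ⟨t, hmem, ht⟩ := (((eventually_add_smul_mem_closedRegion h.1 hl).filter_mono
      nhdsWithin_le_nhds).and self_mem_nhdsWithin :
      ∀ᶠ t in nhdsWithin (0 : ℝ) (Ioi 0), _).exists
    have := h.inner_sub_le_zero convex_closedRegion hmem
    rw [add_sub_cancel_left, real_inner_smul_right] at this
    exact nonpos_of_mul_nonpos_right this ht
  have hneg := hle (-l) (Submodule.neg_mem _ hl)
  rw [inner_neg_right] at hneg
  exact le_antisymm (hle l hl) (by linarith)

end NearestPoints

section Counting

/-- `dim(x, C) = k` for the region `C` of the arrangement `P` in `U`, with the dimension of a face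
read off from its linear span. Empty open regions correspond to no region of the arrangement and
are excluded. -/
def HasProjDim (U : Submodule ℝ (E d)) (P : Finset (E d)) (x : E d) (k : ℕ) : Prop :=
  (openRegion U P).Nonempty ∧
    ∃ y, IsNearestPt (closedRegion U P) x y ∧ Module.finrank ℝ (faceSpan U P y) = k

/-- `x` avoids every hyperplane whose normal is a nonzero projection of some `v ∈ Φ` to a flat of
`Φ` in `U`. -/
def IsGeneric (U : Submodule ℝ (E d)) (Φ : Set (E d)) (x : E d) : Prop :=
  ∀ B : Finset (E d), (B : Set (E d)) ⊆ Φ → ∀ v ∈ Φ,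
    (U ⊓ flatOf B).starProjection v ≠ 0 → ⟪(U ⊓ flatOf B).starProjection v, x⟫ ≠ 0

/-- The sum in Whitney's formula for the coefficient of `t ^ k` in the characteristic polynomial of
the arrangement with normals `S` inside `U`. -/
def whitneySum (U : Submodule ℝ (E d)) (S : Finset (E d)) (k : ℕ) : ℤ :=
  ∑ B ∈ S.powerset,
    if Module.finrank ℝ (U ⊓ flatOf B : Submodule ℝ (E d)) = k then (-1) ^ B.card else 0

/-- The normals in `S`, with those outside `T` reversed. -/
def signedNormals (T S : Finset (E d)) : Finset (E d) := S.image fun v ↦ if v ∈ T then v else -v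

variable {U : Submodule ℝ (E d)} {P S T : Finset (E d)} {Φ : Set (E d)} {v x y : E d} {k : ℕ}

lemma hasProjDim_iff (hy : IsNearestPt (closedRegion U P) x y) :
    HasProjDim U P x k ↔
      (openRegion U P).Nonempty ∧ Module.finrank ℝ (faceSpan U P y) = k := by
  refine and_congr_right fun _ ↦ ⟨?_, fun h ↦ ⟨y, hy, h⟩⟩
  rintro ⟨y', hy', h⟩
  rwa [hy.eq convex_closedRegion hy']

lemma IsGeneric.inf_orthogonal (hx : IsGeneric U Φ x) (hv : v ∈ Φ) :
    IsGeneric (U ⊓ (ℝ ∙ v)ᗮ) Φ x := fun B hB w hw h ↦ by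
  have hB' := hx (insert v B) (by simpa [insert_subset_iff] using ⟨hv, hB⟩) w hw
  simp only [flatOf_insert, ← inf_assoc] at hB'
  exact hB' h

lemma IsGeneric.faceSpan_le_orthogonal (hx : IsGeneric U Φ x) (hP : (P : Set (E d)) ⊆ Φ)
    (hv : v ∈ Φ) (hy : IsNearestPt (closedRegion U P) x y) (hvy : ⟪v, y⟫ = 0) :
    faceSpan U P y ≤ (ℝ ∙ v)ᗮ := by
  have hproj : (faceSpan U P y).starProjection v = 0 := by
    by_contra h
    refine hx _ (fun w hw ↦ hP (Finset.mem_filter.mp hw).1) v hv h ?_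
    rw [Submodule.inner_starProjection_left_eq_right]
    exact (congrArg (⟪v, ·⟫) hy.eq_starProjection_faceSpan).trans hvy
  intro l hl
  rw [Submodule.mem_orthogonal_singleton_iff_inner_right, real_inner_comm]
  exact ((Submodule.starProjection_apply_eq_zero_iff _).mp hproj) l hl

lemma hasProjDim_insert_iff (hx : IsGeneric U Φ x) (hP : (P : Set (E d)) ⊆ Φ) (hv : v ∈ Φ)
    (hO : (openRegion U (insert v P)).Nonempty)
    (hy : IsNearestPt (closedRegion U P) x y) (hvy : 0 ≤ ⟪v, y⟫) :
    HasProjDim U (insert v P) x k ↔ HasProjDim U P x k := by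
  have hy' : IsNearestPt (closedRegion U (insert v P)) x y :=
    hy.mono (fun z hz ↦ (mem_closedRegion_insert.mp hz).2)
      (mem_closedRegion_insert.mpr ⟨hvy, hy.1⟩)
  have hspan : faceSpan U (insert v P) y = faceSpan U P y := by
    rcases hvy.eq_or_lt with h | h
    · rw [faceSpan_insert_of_eq h.symm]
      refine le_antisymm (inf_le_inf_right _ inf_le_left)
        (le_inf (le_inf inf_le_left ?_) inf_le_right)
      exact hx.faceSpan_le_orthogonal hP hv hy h.symm
    · exact faceSpan_insert_of_ne h.ne'
  have hO' : (openRegion U P).Nonempty := hO.mono fun z hz ↦ (mem_openRegion_insert.mp hz).2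
  rw [hasProjDim_iff hy', hasProjDim_iff hy, hspan]
  simp only [hO, hO']

lemma hasProjDim_insert_neg_iff (hO : (openRegion U (insert v P)).Nonempty)
    (hy : IsNearestPt (closedRegion U P) x y) (hvy : 0 ≤ ⟪v, y⟫) :
    HasProjDim U (insert (-v) P) x k ↔ HasProjDim (U ⊓ (ℝ ∙ v)ᗮ) P x k := by
  obtain ⟨z, hz⟩ := exists_isNearestPt_closedRegion U (insert (-v) P) x
  have hset : closedRegion U (insert (-v) P) = {z | 0 ≤ ⟪-v, z⟫ ∧ z ∈ closedRegion U P} :=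
    Set.ext fun _ ↦ mem_closedRegion_insert
  have hvz : ⟪-v, z⟫ = 0 :=
    hy.inner_eq_zero_of_inner_nonpos convex_closedRegion (by simpa using hvy) (hset ▸ hz)
  have hvz' : ⟪v, z⟫ = 0 := by simpa using hvz
  have hz' : IsNearestPt (closedRegion (U ⊓ (ℝ ∙ v)ᗮ) P) x z := by
    refine hz.mono (fun w hw ↦ ?_) (mem_closedRegion_inf_orthogonal.mpr
      ⟨hvz', (mem_closedRegion_insert.mp hz.1).2⟩)
    rw [mem_closedRegion_inf_orthogonal] at hw
    exact mem_closedRegion_insert.mpr ⟨by simp [hw.1], hw.2⟩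
  rw [hasProjDim_iff hz, hasProjDim_iff hz', openRegion_insert_neg_nonempty_iff hO,
    faceSpan_insert_of_eq hvz, ← Set.neg_singleton, Submodule.span_neg]

/-- Of the two pieces into which `v` cuts a region, the one containing the nearest point of the
region inherits its projection dimension, while the other one is projected onto its wall in `v^⊥`,
hence onto the trace of the region. -/
lemma hasProjDim_deletion_restriction (hx : IsGeneric U Φ x) (hP : (P : Set (E d)) ⊆ Φ)
    (hv : v ∈ Φ) (hnv : -v ∈ Φ) (hU : ¬ U ≤ (ℝ ∙ v)ᗮ) (k : ℕ) :
    ((if HasProjDim U (insert v P) x k then 1 else 0) +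
      if HasProjDim U (insert (-v) P) x k then 1 else 0 : ℤ) =
    (if HasProjDim U P x k then 1 else 0) +
      if HasProjDim (U ⊓ (ℝ ∙ v)ᗮ) P x k then 1 else 0 := by
  rcases (openRegion U P).eq_empty_or_nonempty with hO | hO
  · have hempty : ∀ U' P', openRegion U' P' ⊆ openRegion U P → ¬ HasProjDim U' P' x k :=
      fun U' P' hsub h ↦ (h.1.mono hsub).ne_empty hO
    rw [if_neg (hempty _ _ fun z hz ↦ (mem_openRegion_insert.mp hz).2),
      if_neg (hempty _ _ fun z hz ↦ (mem_openRegion_insert.mp hz).2),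
      if_neg (hempty _ _ subset_rfl),
      if_neg (hempty _ _ fun z hz ↦ (mem_openRegion_inf_orthogonal.mp hz).2)]
  obtain ⟨y, hy⟩ := exists_isNearestPt_closedRegion U P x
  have hside : (0 ≤ ⟪v, y⟫ ∧ (openRegion U (insert v P)).Nonempty) ∨
      (0 ≤ ⟪-v, y⟫ ∧ (openRegion U (insert (-v) P)).Nonempty) := by
    rcases lt_trichotomy ⟪v, y⟫ 0 with h | h | h
    · have hneg : 0 < ⟪-v, y⟫ := by simpa using h
      exact .inr ⟨hneg.le, openRegion_insert_nonempty_of_inner_pos hO hy.1 hneg⟩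
    · exact (openRegion_insert_nonempty_or hO hU).imp (⟨h.ge, ·⟩) (⟨by simp [h], ·⟩)
    · exact .inl ⟨h.le, openRegion_insert_nonempty_of_inner_pos hO hy.1 h⟩
  rcases hside with ⟨hvy, hO⟩ | ⟨hvy, hO⟩
  · simp only [hasProjDim_insert_iff hx hP hv hO hy hvy, hasProjDim_insert_neg_iff hO hy hvy]
  · have hneg := hasProjDim_insert_neg_iff (k := k) hO hy hvy
    rw [neg_neg, ← Set.neg_singleton, Submodule.span_neg] at hneg
    simp only [hasProjDim_insert_iff hx hP hnv hO hy hvy, hneg, add_comm]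

lemma whitneySum_insert (hv : v ∉ S) :
    whitneySum U (insert v S) k = whitneySum U S k - whitneySum (U ⊓ (ℝ ∙ v)ᗮ) S k := by
  rw [whitneySum, Finset.sum_powerset_insert hv, sub_eq_add_neg, whitneySum, whitneySum,
    ← Finset.sum_neg_distrib]
  congr 1
  refine Finset.sum_congr rfl fun B hB ↦ ?_
  rw [flatOf_insert, ← inf_assoc,
    Finset.card_insert_of_notMem fun h ↦ hv (Finset.mem_powerset.mp hB h), pow_succ]
  split_ifs <;> simp

lemma signedNormals_insert_insert (hv : v ∉ S) :
    signedNormals (insert v T) (insert v S) = insert v (signedNormals T S) := by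
  rw [signedNormals, Finset.image_insert, if_pos (Finset.mem_insert_self v T)]
  refine congrArg _ (Finset.image_congr fun w hw ↦ ?_)
  have hwv : w ≠ v := fun h ↦ hv (h ▸ hw)
  simp only [Finset.mem_insert, hwv, false_or]

lemma signedNormals_insert_of_notMem (hv : v ∉ T) :
    signedNormals T (insert v S) = insert (-v) (signedNormals T S) := by
  rw [signedNormals, Finset.image_insert, if_neg hv, signedNormals]

lemma signedNormals_subset (hS : ∀ v ∈ S, v ∈ Φ ∧ -v ∈ Φ) :
    (signedNormals T S : Set (E d)) ⊆ Φ := by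
  intro w hw
  obtain ⟨v, hv, rfl⟩ := Finset.mem_image.mp hw
  split_ifs
  exacts [(hS v hv).1, (hS v hv).2]

lemma finrank_inf_orthogonal_add_one (hU : ¬ U ≤ (ℝ ∙ v)ᗮ) :
    Module.finrank ℝ (U ⊓ (ℝ ∙ v)ᗮ : Submodule ℝ (E d)) + 1 = Module.finrank ℝ U := by
  have hinner : ∀ z ∈ U, ⟪U.starProjection v, z⟫ = ⟪v, z⟫ := fun z hz ↦ by
    rw [Submodule.inner_starProjection_left_eq_right, Submodule.starProjection_eq_self_iff.mpr hz]
  obtain ⟨u, hu, hvu⟩ := SetLike.not_le_iff_exists.mp hU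
  have hne : U.starProjection v ≠ 0 := fun h ↦ hvu <| by
    rw [Submodule.mem_orthogonal_singleton_iff_inner_right, ← hinner u hu, h, inner_zero_left]
  have hinf : (ℝ ∙ U.starProjection v)ᗮ ⊓ U = U ⊓ (ℝ ∙ v)ᗮ := by
    rw [inf_comm]
    ext z
    simp only [Submodule.mem_inf, Submodule.mem_orthogonal_singleton_iff_inner_right]
    exact and_congr_right fun hz ↦ by rw [hinner z hz]
  have hle : (ℝ ∙ U.starProjection v) ≤ U :=
    (Submodule.span_singleton_le_iff_mem _ _).mpr (U.starProjection_apply_mem v)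
  rw [← hinf, ← Submodule.finrank_add_inf_finrank_orthogonal hle, finrank_span_singleton hne,
    add_comm]

lemma hasProjDim_empty_iff : HasProjDim U ∅ x k ↔ Module.finrank ℝ U = k := by
  obtain ⟨y, hy⟩ := exists_isNearestPt_closedRegion U ∅ x
  have hspan : faceSpan U ∅ y = U := by simp [faceSpan, flatOf]
  rw [hasProjDim_iff hy, hspan]
  exact and_iff_right ⟨0, U.zero_mem, by simp⟩

lemma not_hasProjDim_of_mem (hU : U ≤ (ℝ ∙ v)ᗮ) (hv : v ∈ P) : ¬ HasProjDim U P x k := by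
  rintro ⟨⟨z, hz⟩, -⟩
  exact (hz.2 v hv).ne' (Submodule.mem_orthogonal_singleton_iff_inner_right.mp (hU hz.1))

theorem sum_hasProjDim_eq_whitneySum (hS : ∀ v ∈ S, v ∈ Φ ∧ -v ∈ Φ) (hx : IsGeneric U Φ x) (k : ℕ) :
    ∑ T ∈ S.powerset, (if HasProjDim U (signedNormals T S) x k then 1 else 0 : ℤ) =
      (-1) ^ (Module.finrank ℝ U + k) * whitneySum U S k := by
  induction S using Finset.induction_on generalizing U with
  | empty =>
    have hflat : U ⊓ flatOf ∅ = U := by simp [flatOf]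
    rw [Finset.powerset_empty, Finset.sum_singleton, whitneySum, Finset.powerset_empty,
      Finset.sum_singleton, hflat, signedNormals, Finset.image_empty]
    simp only [hasProjDim_empty_iff]
    split_ifs with h
    · simp [h, ← two_mul]
    · simp
  | insert v S hv ih =>
    obtain ⟨hvΦ, hS⟩ := (Finset.forall_mem_insert _ _ _).mp hS
    have hneg : ∀ T ∈ S.powerset, signedNormals T (insert v S) = insert (-v) (signedNormals T S) :=
      fun T hT ↦ signedNormals_insert_of_notMem fun h ↦ hv (Finset.mem_powerset.mp hT h)
    rw [Finset.sum_powerset_insert hv, whitneySum_insert hv, ← Finset.sum_add_distrib]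
    by_cases hU : U ≤ (ℝ ∙ v)ᗮ
    · rw [inf_eq_left.mpr hU, sub_self, mul_zero]
      refine Finset.sum_eq_zero fun T hT ↦ ?_
      rw [hneg T hT, signedNormals_insert_insert hv,
        if_neg (not_hasProjDim_of_mem hU (Finset.mem_insert_self _ _)),
        if_neg (not_hasProjDim_of_mem (v := -v) ?_ (Finset.mem_insert_self _ _)), add_zero]
      rwa [← Set.neg_singleton, Submodule.span_neg]
    · rw [Finset.sum_congr rfl fun T hT ↦ by
        rw [hneg T hT, signedNormals_insert_insert hv, add_comm,
          hasProjDim_deletion_restriction hx (signedNormals_subset hS) hvΦ.1 hvΦ.2 hU],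
        Finset.sum_add_distrib, ih hS hx, ih hS (hx.inf_orthogonal hvΦ.1),
        ← finrank_inf_orthogonal_add_one hU]
      ring

end Counting

section Faces

lemma mem_intrinsicInterior_of_isOpen {V : Type*} [NormedAddCommGroup V] [NormedSpace ℝ V]
    {F O : Set V} {y : V} (hO : IsOpen O) (hyO : y ∈ O) (hyF : y ∈ F)
    (hsub : O ∩ affineSpan ℝ F ⊆ F) : y ∈ intrinsicInterior ℝ F :=
  mem_intrinsicInterior.mpr ⟨⟨y, subset_affineSpan ℝ F hyF⟩,
    mem_interior.mpr ⟨_, fun z hz ↦ hsub ⟨hz, z.2⟩, hO.preimage continuous_subtype_val, hyO⟩, rfl⟩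

lemma eventually_lineMap_mem_of_mem_intrinsicInterior {V : Type*} [NormedAddCommGroup V]
    [NormedSpace ℝ V] {F : Set V} {y z : V} (hy : y ∈ intrinsicInterior ℝ F) (hz : z ∈ F) :
    ∀ᶠ t : ℝ in nhds 0, AffineMap.lineMap y z t ∈ F := by
  obtain ⟨y, hyint, rfl⟩ := mem_intrinsicInterior.mp hy
  have hcont : Continuous fun t : ℝ ↦ (⟨AffineMap.lineMap (y : V) z t,
      AffineMap.lineMap_mem t y.2 (subset_affineSpan ℝ F hz)⟩ : affineSpan ℝ F) :=
    AffineMap.lineMap_continuous.subtype_mk _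
  refine hcont.continuousAt.eventually (p := (· ∈ ((↑) ⁻¹' F : Set (affineSpan ℝ F)))) ?_
  simp only [AffineMap.lineMap_apply_zero]
  exact mem_interior_iff_mem_nhds.mp hyint

variable {P F : Set (E d)} {y z l : E d}

lemma IsFaceOf.subset (hF : IsFaceOf P F) : F ⊆ P := by
  rcases hF with rfl | ⟨w, c, -, rfl⟩
  exacts [subset_rfl, sep_subset _ _]

lemma IsFaceOf.add_mem_of_sub_mem (hF : IsFaceOf P F) (hy : y ∈ F) (hadd : y + l ∈ P)
    (hsub : y - l ∈ P) : y + l ∈ F := by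
  rcases hF with rfl | ⟨w, c, hle, rfl⟩
  · exact hadd
  · have h1 := hle _ hadd
    have h2 := hle _ hsub
    refine ⟨hadd, h1.antisymm ?_⟩
    rw [inner_add_right] at h1 ⊢
    rw [inner_sub_right] at h2
    linarith [hy.2]

variable {U : Submodule ℝ (E d)} {S : Finset (E d)}

lemma faceSpan_le_direction (hF : IsFaceOf (closedRegion U S) F) (hy : y ∈ F) :
    faceSpan U S y ≤ (affineSpan ℝ F).direction := by
  intro l hl
  have hyP := hF.subset hy
  obtain ⟨t, ⟨hadd, hsub⟩, ht⟩ := ((((eventually_add_smul_mem_closedRegion hyP hl).and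
    (eventually_add_smul_mem_closedRegion hyP (Submodule.neg_mem _ hl))).filter_mono
    nhdsWithin_le_nhds).and self_mem_nhdsWithin : ∀ᶠ t in nhdsWithin (0 : ℝ) (Ioi 0), _).exists
  rw [smul_neg, ← sub_eq_add_neg] at hsub
  have hmem := AffineSubspace.vsub_mem_direction
    (subset_affineSpan ℝ F (hF.add_mem_of_sub_mem hy hadd hsub)) (subset_affineSpan ℝ F hy)
  rw [vsub_eq_sub, add_sub_cancel_left] at hmem
  exact (Submodule.smul_mem_iff _ (ne_of_gt ht)).mp hmem

lemma direction_le_faceSpan (hF : F ⊆ closedRegion U S) (hy : y ∈ intrinsicInterior ℝ F) :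
    (affineSpan ℝ F).direction ≤ faceSpan U S y := by
  have hyF := intrinsicInterior_subset hy
  rw [direction_affineSpan, vectorSpan_eq_span_vsub_set_right ℝ hyF, Submodule.span_le]
  rintro _ ⟨z, hz, rfl⟩
  refine ⟨U.sub_mem (hF hz).1 (hF hyF).1, mem_flatOf.mpr fun v hv ↦ ?_⟩
  obtain ⟨hvS, hvy⟩ := Finset.mem_filter.mp hv
  obtain ⟨t, hmem, ht⟩ := (((eventually_lineMap_mem_of_mem_intrinsicInterior hy hz).filter_mono
    nhdsWithin_le_nhds).and self_mem_nhdsWithin : ∀ᶠ t in nhdsWithin (0 : ℝ) (Iio 0), _).exists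
  have hle := (hF hmem).2 v hvS
  rw [AffineMap.lineMap_apply, vsub_eq_sub, vadd_eq_add, inner_add_right, real_inner_smul_right,
    inner_sub_right, hvy] at hle
  have hge := (hF hz).2 v hvS
  change ⟪v, z - y⟫ = 0
  rw [inner_sub_right, hvy, sub_zero]
  rw [add_zero, sub_zero] at hle
  exact le_antisymm (nonpos_of_mul_nonneg_right hle ht) hge

lemma isFaceOf_closedRegion_inter_faceSpan :
    IsFaceOf (closedRegion U S) (closedRegion U S ∩ faceSpan U S y) := by
  have hinner : ∀ z, ⟪-∑ v ∈ S with ⟪v, y⟫ = 0, v, z⟫ = -∑ v ∈ S with ⟪v, y⟫ = 0, ⟪v, z⟫ :=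
    fun z ↦ by rw [inner_neg_left, sum_inner]
  have hnonneg : ∀ z ∈ closedRegion U S, ∀ v ∈ S.filter (⟪·, y⟫ = 0), 0 ≤ ⟪v, z⟫ :=
    fun z hz v hv ↦ hz.2 v (Finset.mem_filter.mp hv).1
  refine .inr ⟨-∑ v ∈ S with ⟪v, y⟫ = 0, v, 0, fun z hz ↦ ?_, ?_⟩
  · rw [hinner]
    exact neg_nonpos.mpr (Finset.sum_nonneg (hnonneg z hz))
  · ext z
    refine and_congr_right fun hz ↦ ?_
    rw [hinner, neg_eq_zero, Finset.sum_eq_zero_iff_of_nonneg (hnonneg z hz), faceSpan,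
      SetLike.mem_coe, Submodule.mem_inf, mem_flatOf]
    exact and_iff_right hz.1

lemma mem_intrinsicInterior_closedRegion_inter_faceSpan (hy : y ∈ closedRegion U S) :
    y ∈ intrinsicInterior ℝ (closedRegion U S ∩ faceSpan U S y) := by
  have hspan : affineSpan ℝ (closedRegion U S ∩ faceSpan U S y) ≤
      (faceSpan U S y).toAffineSubspace := affineSpan_le.mpr inter_subset_right
  have hopen : IsOpen (⋂ v ∈ S.filter (⟪·, y⟫ ≠ 0), {z | 0 < ⟪v, z⟫}) :=
    isOpen_biInter_finset fun v _ ↦ isOpen_lt continuous_const (by fun_prop)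
  refine mem_intrinsicInterior_of_isOpen hopen (mem_iInter₂.mpr fun v hv ↦ ?_)
    ⟨hy, self_mem_faceSpan hy⟩ ?_
  · obtain ⟨hvS, hvy⟩ := Finset.mem_filter.mp hv
    exact (hy.2 v hvS).lt_of_ne' hvy
  · rintro z ⟨hzO, hzF⟩
    have hz : z ∈ faceSpan U S y := hspan hzF
    refine ⟨⟨hz.1, fun v hv ↦ ?_⟩, hz⟩
    rcases eq_or_ne ⟪v, y⟫ 0 with hvy | hvy
    · exact (mem_flatOf.mp hz.2 v (Finset.mem_filter.mpr ⟨hv, hvy⟩)).ge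
    · exact (mem_iInter₂.mp hzO v (Finset.mem_filter.mpr ⟨hv, hvy⟩)).le

theorem projDimEq_closedRegion_iff {x : E d} {k : ℕ} : projDimEq (closedRegion U S) x k ↔
    ∃ y, IsNearestPt (closedRegion U S) x y ∧ Module.finrank ℝ (faceSpan U S y) = k := by
  have hdim : ∀ {F y}, IsFaceOf (closedRegion U S) F → y ∈ intrinsicInterior ℝ F →
      sdim F = Module.finrank ℝ (faceSpan U S y) := fun hF hy ↦ by
    rw [sdim, le_antisymm (direction_le_faceSpan hF.subset hy)
      (faceSpan_le_direction hF (intrinsicInterior_subset hy))]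
  constructor
  · rintro ⟨y, F, hy, hF, hyF, rfl⟩
    exact ⟨y, hy, (hdim hF hyF).symm⟩
  · rintro ⟨y, hy, rfl⟩
    have hyF := mem_intrinsicInterior_closedRegion_inter_faceSpan hy.1
    exact ⟨y, _, hy, isFaceOf_closedRegion_inter_faceSpan, hyF,
      hdim isFaceOf_closedRegion_inter_faceSpan hyF⟩

lemma sdim_submodule (L : Submodule ℝ (E d)) : sdim (L : Set (E d)) = Module.finrank ℝ L := by
  change Module.finrank ℝ (affineSpan ℝ (L.toAffineSubspace : Set (E d))).direction = _
  rw [AffineSubspace.affineSpan_coe, Submodule.toAffineSubspace_direction]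

section Isometry

variable {k : ℕ} {x : E d} (g : E d ≃ₗᵢ[ℝ] E d)

lemma IsNearestPt.image (h : IsNearestPt P x y) : IsNearestPt (g '' P) (g x) (g y) :=
  ⟨mem_image_of_mem g h.1, forall_mem_image.mpr fun z hz ↦ by
    simpa only [g.dist_map] using h.2 z hz⟩

lemma IsFaceOf.image (hF : IsFaceOf P F) : IsFaceOf (g '' P) (g '' F) := by
  rcases hF with rfl | ⟨w, c, hle, rfl⟩
  · exact .inl rfl
  · refine .inr ⟨g w, c, forall_mem_image.mpr fun z hz ↦ by
      simpa only [g.inner_map_map] using hle z hz, ?_⟩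
    ext z
    obtain ⟨z, rfl⟩ := g.surjective z
    simp [g.inner_map_map]

lemma sdim_image : sdim (g '' F) = sdim F := by
  have hmap : vectorSpan ℝ (g '' F) = (vectorSpan ℝ F).map g.toLinearEquiv.toLinearMap :=
    g.toLinearEquiv.toLinearMap.toAffineMap.map_vectorSpan.symm
  rw [sdim, sdim, direction_affineSpan, direction_affineSpan, hmap, LinearEquiv.finrank_map_eq]

lemma projDimEq.image (h : projDimEq P x k) : projDimEq (g '' P) (g x) k := by
  obtain ⟨y, F, hy, hF, hyF, rfl⟩ := h
  refine ⟨g y, g '' F, hy.image g, hF.image g, ?_, sdim_image g⟩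
  have := AffineIsometry.intrinsicInterior_image g.toAffineIsometryEquiv.toAffineIsometry F
  exact this ▸ mem_image_of_mem g hyF

lemma projDimEq_image_iff : projDimEq (g '' P) (g x) k ↔ projDimEq P x k := by
  refine ⟨fun h ↦ ?_, .image g⟩
  simpa [image_image] using h.image g.symm

end Isometry

end Faces

section Chambers

variable {V : Type*} [NormedAddCommGroup V] [InnerProductSpace ℝ V] {W : Subgroup (V ≃ₗᵢ[ℝ] V)}
  {S : Finset V} {p q x : V} {g h : V ≃ₗᵢ[ℝ] V}

lemma posRoots_map (hg : g ∈ W) : posRoots W (g p) = g '' posRoots W p := by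
  have hgg : ∀ v, g (g⁻¹ v) = v := g.apply_symm_apply
  refine Subset.antisymm (fun v hv ↦ ⟨g⁻¹ v, ⟨map_mem_unitRoots (W.inv_mem hg) hv.1, ?_⟩, hgg v⟩)
    (image_subset_iff.mpr fun v hv ↦ ⟨map_mem_unitRoots hg hv.1, ?_⟩)
  · rw [← inner_map_right]
    exact hv.2
  · rw [g.inner_map_map]
    exact hv.2

lemma eq_of_posRoots_map_eq [Finite W] (hW : Subgroup.closure (reflectionAlong '' unitRoots W) = W)
    (hp : IsRegularPoint W p) (hg : g ∈ W) (hh : h ∈ W)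
    (hgh : posRoots W (g p) = posRoots W (h p)) : g = h := by
  refine (inv_mul_eq_one.mp (eq_one_of_forall_posRoots_inner_pos hW hp
    (W.mul_mem (W.inv_mem hg) hh) fun v hv ↦ ?_))
  have hgv : g v ∈ posRoots W (h p) := hgh ▸ posRoots_map hg ▸ mem_image_of_mem g hv
  rw [LinearIsometryEquiv.coe_mul, Function.comp_apply, inner_map_right, inv_inv]
  exact hgv.2

lemma image_closedRegion_top [DecidableEq V] (g : V ≃ₗᵢ[ℝ] V) :
    g '' closedRegion ⊤ S = closedRegion ⊤ (S.image g) := by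
  ext z
  obtain ⟨z, rfl⟩ := g.surjective z
  simp [closedRegion, g.inner_map_map]

/-- The hyperplane with normal vector `v`, as a set: the mirror of `reflectionAlong v`. -/
def mirror (v : V) : Set V := {z | ⟪v, z⟫ = 0}

lemma mirror_neg (v : V) : mirror (-v) = mirror v := by
  simp only [mirror, inner_neg_left, neg_eq_zero]

lemma image_mirror_posRoots (hp : IsRegularPoint W p) :
    mirror '' posRoots W p = mirror '' unitRoots W := by
  refine (image_mono (sep_subset _ _)).antisymm (image_subset_iff.mpr fun v hv ↦ ?_)
  rcases hp.mem_posRoots_or_neg_mem hv with hv | hv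
  exacts [⟨v, hv, rfl⟩, ⟨-v, hv, mirror_neg v⟩]

lemma injOn_mirror_posRoots : InjOn mirror (posRoots W p) := by
  intro u hu v hv huv
  have hperp : (ℝ ∙ u)ᗮ = (ℝ ∙ v)ᗮ := Submodule.ext fun z ↦ by
    rw [Submodule.mem_orthogonal_singleton_iff_inner_right,
      Submodule.mem_orthogonal_singleton_iff_inner_right]
    exact Set.ext_iff.mp huv z
  have hrefl : reflectionAlong u = reflectionAlong v := by simp only [reflectionAlong, hperp]
  refine (eq_or_eq_neg_of_reflectionAlong_eq hu.1.1 hv.1.1 hrefl).resolve_right ?_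
  rintro rfl
  exact hu.2.not_gt (by rw [inner_neg_left, neg_neg_iff_pos]; exact hv.2)

lemma connectedComponentIn_eq_openRegion (hp : p ∈ openRegion ⊤ S) :
    connectedComponentIn (⋃ v ∈ S, mirror v)ᶜ p = openRegion ⊤ S := by
  have hmem : ∀ z, z ∈ (⋃ v ∈ S, mirror v)ᶜ ↔ ∀ v ∈ S, ⟪v, z⟫ ≠ 0 := by simp [mirror]
  have hsub : openRegion ⊤ S ⊆ (⋃ v ∈ S, mirror v)ᶜ :=
    fun z hz ↦ (hmem z).mpr fun v hv ↦ (hz.2 v hv).ne'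
  refine Subset.antisymm (fun z hz ↦ ⟨trivial, fun v hv ↦ ?_⟩)
    (convex_openRegion.isPreconnected.subset_connectedComponentIn hp hsub)
  by_contra! hle
  obtain ⟨w, hw, hw0⟩ := isPreconnected_connectedComponentIn.intermediate_value hz
    (mem_connectedComponentIn (hsub hp)) (f := fun z ↦ ⟪v, z⟫) (by fun_prop)
    ⟨hle, (hp.2 v hv).le⟩
  exact (hmem w).mp (connectedComponentIn_subset _ _ hw) v hv hw0

lemma closure_openRegion [FiniteDimensional ℝ V] {U : Submodule ℝ V}
    (hO : (openRegion U S).Nonempty) : closure (openRegion U S) = closedRegion U S := by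
  refine (closure_minimal openRegion_subset_closedRegion isClosed_closedRegion).antisymm
    fun z hz ↦ ?_
  obtain ⟨p, hp⟩ := hO
  have hlim : Filter.Tendsto (fun t : ℝ ↦ z + t • p) (nhdsWithin 0 (Ioi 0)) (nhds z) := by
    have hcont : Continuous fun t : ℝ ↦ z + t • p := by fun_prop
    simpa using (hcont.tendsto 0).mono_left nhdsWithin_le_nhds
  refine mem_closure_of_tendsto hlim (Filter.mem_of_superset self_mem_nhdsWithin fun t ht ↦
    ⟨U.add_mem hz.1 (U.smul_mem t hp.1), fun v hv ↦ ?_⟩)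
  rw [inner_add_right, real_inner_smul_right]
  exact add_pos_of_nonneg_of_pos (hz.2 v hv) (mul_pos ht (hp.2 v hv))

end Chambers

section Arrangement

variable {W : Subgroup (E d ≃ₗᵢ[ℝ] E d)} {S T : Finset (E d)} {p q x : E d} {g : E d ≃ₗᵢ[ℝ] E d}
  {k : ℕ}

lemma coe_signedNormals_eq_posRoots (hp : IsRegularPoint W p) (hq : IsRegularPoint W q)
    (hS : (S : Set (E d)) = posRoots W p) :
    (signedNormals {v ∈ S | 0 < ⟪v, q⟫} S : Set (E d)) = posRoots W q := by
  have hmemS : ∀ v, v ∈ S ↔ v ∈ posRoots W p := Set.ext_iff.mp hS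
  ext w
  simp only [signedNormals, Finset.coe_image, mem_image, Finset.mem_coe, Finset.mem_filter]
  constructor
  · rintro ⟨v, hv, rfl⟩
    have hvW := ((hmemS v).mp hv).1
    split_ifs with h
    · exact ⟨hvW, h.2⟩
    · refine ⟨neg_mem_unitRoots hvW, ?_⟩
      rw [inner_neg_left, neg_pos]
      exact (hq v hvW).lt_of_le (not_lt.mp fun h' ↦ h ⟨hv, h'⟩)
  · intro hw
    rcases hp.mem_posRoots_or_neg_mem hw.1 with hv | hv
    · exact ⟨w, (hmemS w).mpr hv, if_pos ⟨(hmemS w).mpr hv, hw.2⟩⟩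
    · refine ⟨-w, (hmemS _).mpr hv, ?_⟩
      rw [if_neg, neg_neg]
      rw [inner_neg_left, neg_pos]
      exact fun h ↦ h.2.not_gt hw.2

lemma hasProjDim_signedNormals_iff (hp : IsRegularPoint W p) (hS : (S : Set (E d)) = posRoots W p)
    (hg : g ∈ W) :
    HasProjDim ⊤ (signedNormals {v ∈ S | 0 < ⟪v, g⁻¹ p⟫} S) x k ↔
      projDimEq (closedRegion ⊤ S) (g x) k := by
  have hcoe := coe_signedNormals_eq_posRoots hp (hp.map (W.inv_mem hg)) hS
  have himage : signedNormals {v ∈ S | 0 < ⟪v, g⁻¹ p⟫} S = S.image ⇑g⁻¹ := by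
    rw [← Finset.coe_inj, hcoe, posRoots_map (W.inv_mem hg), Finset.coe_image, hS]
  have hregion : g '' closedRegion ⊤ (S.image ⇑g⁻¹) = closedRegion ⊤ S := by
    rw [image_closedRegion_top, Finset.image_image, ← LinearIsometryEquiv.coe_mul, mul_inv_cancel,
      LinearIsometryEquiv.coe_one, Finset.image_id]
  rw [← hregion, projDimEq_image_iff, projDimEq_closedRegion_iff, ← himage]
  exact and_iff_right ⟨g⁻¹ p, trivial, fun v hv ↦ (hcoe.subset hv).2⟩

lemma exists_mem_filter_inner_pos_eq [Finite W] (hp : IsRegularPoint W p)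
    (hS : (S : Set (E d)) = posRoots W p) (hT : T ⊆ S)
    (hO : (openRegion ⊤ (signedNormals T S)).Nonempty) :
    ∃ g ∈ W, S.filter (0 < ⟪·, g⁻¹ p⟫) = T := by
  obtain ⟨q, -, hq⟩ := hO
  have hmemT : ∀ v ∈ S, ⟪v, q⟫ ≠ 0 ∧ (0 < ⟪v, q⟫ ↔ v ∈ T) := fun v hv ↦ by
    have := hq _ (Finset.mem_image_of_mem _ hv)
    split_ifs at this with h
    · exact ⟨this.ne', iff_of_true this h⟩
    · rw [inner_neg_left, neg_pos] at this
      exact ⟨this.ne, iff_of_false this.not_gt h⟩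
  have hqreg : IsRegularPoint W q := fun v hv ↦ by
    rcases hp.mem_posRoots_or_neg_mem hv with hv | hv
    · exact (hmemT v (hS.superset hv)).1
    · simpa using (hmemT _ (hS.superset hv)).1
  obtain ⟨g, hg, hpos⟩ := exists_mem_forall_inner_mul_inner_pos hp hqreg
  refine ⟨g⁻¹, W.inv_mem hg, Finset.ext fun v ↦ ?_⟩
  rw [Finset.mem_filter, inv_inv]
  by_cases hv : v ∈ S
  · rw [and_iff_right hv, ← (hmemT v hv).2]
    exact (pos_iff_pos_of_mul_pos (hpos v (hS.subset hv).1)).symm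
  · exact iff_of_false (fun h ↦ hv h.1) fun h ↦ hv (hT h)

theorem ncard_projDimEq_eq_whitneySum [Finite W]
    (hW : Subgroup.closure (reflectionAlong '' unitRoots W) = W) (hp : IsRegularPoint W p)
    (hS : (S : Set (E d)) = posRoots W p) (hx : IsGeneric ⊤ (unitRoots W) x) (k : ℕ) :
    ({g | g ∈ W ∧ projDimEq (closedRegion ⊤ S) (g x) k}.ncard : ℤ) =
      (-1) ^ (d + k) * whitneySum ⊤ S k := by
  have hroots : ∀ v ∈ S, v ∈ unitRoots W ∧ -v ∈ unitRoots W := fun v hv ↦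
    ⟨(hS.subset hv).1, neg_mem_unitRoots (hS.subset hv).1⟩
  have hinj : InjOn (fun g : E d ≃ₗᵢ[ℝ] E d ↦ S.filter (0 < ⟪·, g⁻¹ p⟫))
      {g | g ∈ W ∧ projDimEq (closedRegion ⊤ S) (g x) k} := by
    rintro g ⟨hg, -⟩ h ⟨hh, -⟩ hgh
    refine inv_injective (eq_of_posRoots_map_eq hW hp (W.inv_mem hg) (W.inv_mem hh) ?_)
    rw [← coe_signedNormals_eq_posRoots hp (hp.map (W.inv_mem hg)) hS,
      ← coe_signedNormals_eq_posRoots hp (hp.map (W.inv_mem hh)) hS]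
    exact congrArg (fun T ↦ (signedNormals T S : Set (E d))) hgh
  have himage : (fun g : E d ≃ₗᵢ[ℝ] E d ↦ S.filter (0 < ⟪·, g⁻¹ p⟫)) ''
      {g | g ∈ W ∧ projDimEq (closedRegion ⊤ S) (g x) k} =
      (S.powerset.filter fun T ↦ HasProjDim ⊤ (signedNormals T S) x k : Finset _) := by
    ext T
    rw [Finset.mem_coe, Finset.mem_filter, Finset.mem_powerset]
    constructor
    · rintro ⟨g, ⟨hg, hk⟩, rfl⟩
      exact ⟨Finset.filter_subset _ _, (hasProjDim_signedNormals_iff hp hS hg).mpr hk⟩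
    · rintro ⟨hT, hk⟩
      obtain ⟨g, hg, rfl⟩ := exists_mem_filter_inner_pos_eq hp hS hT hk.1
      exact ⟨g, ⟨hg, (hasProjDim_signedNormals_iff hp hS hg).mp hk⟩, rfl⟩
  rw [← hinj.ncard_image, himage, ncard_coe_finset, ← Finset.sum_boole,
    sum_hasProjDim_eq_whitneySum hroots hx, finrank_top, finrank_euclideanSpace_fin]

lemma exists_isHyperplane_forall_isGeneric {U : Submodule ℝ (E d)} {Φ : Set (E d)}
    (hΦ : Φ.Finite) : ∃ (m : ℕ) (Hs : Fin m → Set (E d)), (∀ i, IsHyperplane (Hs i)) ∧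
      ∀ x ∉ ⋃ i, Hs i, IsGeneric U Φ x := by
  set N : Set (E d) := {u | u ≠ 0 ∧ ∃ B : Finset (E d), (B : Set (E d)) ⊆ Φ ∧ ∃ v ∈ Φ,
    (U ⊓ flatOf B).starProjection v = u}
  have hNfin : N.Finite := by
    refine ((hΦ.finite_subsets.preimage Finset.coe_injective.injOn).biUnion fun B _ ↦
      hΦ.image (U ⊓ flatOf B).starProjection).subset ?_
    rintro u ⟨-, B, hB, v, hv, rfl⟩
    exact mem_biUnion (mem_preimage.mpr hB) (mem_image_of_mem _ hv)
  obtain ⟨m, u, -, hu⟩ := hNfin.fin_param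
  refine ⟨m, fun i ↦ {z | ⟪u i, z⟫ = 0}, fun i ↦
    ⟨u i, 0, (hu.subset (mem_range_self i)).1, rfl⟩, fun x hx B hB v hv hne hzero ↦ hx ?_⟩
  obtain ⟨i, hi⟩ := hu.superset (show _ ∈ N from ⟨hne, B, hB, v, hv, rfl⟩)
  exact mem_iUnion.mpr ⟨i, hi ▸ hzero⟩

lemma charCoeff_image_mirror (hS : InjOn mirror (S : Set (E d))) (k : ℕ) :
    charCoeff (S.image mirror) k = (-1) ^ (d - k) * whitneySum ⊤ S k := by
  have hinter : ∀ B : Finset (E d), interSet (B.image mirror) =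
      ((⊤ ⊓ flatOf B : Submodule ℝ (E d)) : Set (E d)) := fun B ↦ by
    ext z
    simp [interSet, mem_flatOf, mirror]
  rw [charCoeff, whitneySum, Finset.powerset_image,
    Finset.sum_image (Finset.image_injOn_powerset_of_injOn hS)]
  refine congrArg _ (Finset.sum_congr rfl fun B hB ↦ ?_)
  have hne : ((⊤ ⊓ flatOf B : Submodule ℝ (E d)) : Set (E d)).Nonempty :=
    ⟨0, Submodule.zero_mem _⟩
  rw [Finset.card_image_of_injOn (hS.mono (Finset.coe_subset.mpr (Finset.mem_powerset.mp hB)))]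
  simp only [hinter, hne, true_and, sdim_submodule]

lemma image_reflectionAlong_unitRoots :
    reflectionAlong '' unitRoots W = {g : E d ≃ₗᵢ[ℝ] E d | g ∈ W ∧ IsReflection g} := by
  ext g
  simp only [isReflection_iff_exists_reflectionAlong]
  constructor
  · rintro ⟨v, ⟨hv, hvW⟩, rfl⟩
    exact ⟨hvW, v, hv, rfl⟩
  · rintro ⟨hvW, v, hv, rfl⟩
    exact ⟨v, ⟨hv, hvW⟩, rfl⟩

lemma image_mirror_unitRoots : mirror '' unitRoots W =
    {H | ∃ g ∈ W, IsReflection g ∧ {x : E d | g x = x} = H} := by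
  have hfix : ∀ v : E d, {x | reflectionAlong v x = x} = mirror v := fun v ↦
    Set.ext fun _ ↦ reflectionAlong_eq_self_iff
  calc mirror '' unitRoots W
      = (fun g : E d ≃ₗᵢ[ℝ] E d ↦ {x | g x = x}) '' (reflectionAlong '' unitRoots W) := by
        simp only [image_image, hfix]
    _ = {H | ∃ g ∈ W, IsReflection g ∧ {x : E d | g x = x} = H} := by
        rw [image_reflectionAlong_unitRoots]
        simp only [image, mem_ofPred_eq, and_assoc]

lemma closure_connectedComponentIn_eq_closedRegion (hpS : p ∈ openRegion ⊤ S) :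
    closure (connectedComponentIn (⋃ H ∈ S.image mirror, H)ᶜ p) = closedRegion ⊤ S := by
  rw [Finset.set_biUnion_finset_image, connectedComponentIn_eq_openRegion hpS,
    closure_openRegion ⟨p, hpS⟩]

end Arrangement

/-- Drton–Klivans conjecture: for a finite reflection group `W`
with reflection arrangement `A` and a fixed closed chamber `C`, for generic `x`
the number of `g ∈ W` with `dim(gx, C) = k` equals `a_k`. -/
theorem stmt14 {d : ℕ} (W : Subgroup ((E d) ≃ₗᵢ[ℝ] (E d))) (hWfin : Finite W)
    (hWrefl : Subgroup.closure {g : (E d) ≃ₗᵢ[ℝ] (E d) | g ∈ W ∧ IsReflection g} = W)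
    (A : Finset (Set (E d)))
    (hA : (A : Set (Set (E d))) = {H | ∃ g ∈ W, IsReflection g ∧ {x : E d | g x = x} = H})
    (C : Set (E d)) (hC : IsChamber A C) :
    ∃ (m : ℕ) (Hs : Fin m → Set (E d)), (∀ i, IsHyperplane (Hs i)) ∧
      ∀ x : E d, x ∉ ⋃ i, Hs i → ∀ k : ℕ, k ≤ d →
        (Set.ncard {g : (E d) ≃ₗᵢ[ℝ] (E d) | g ∈ W ∧ projDimEq C (g x) k} : ℤ)
          = charCoeff A k := by
  rw [← image_reflectionAlong_unitRoots] at hWrefl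
  rw [← image_mirror_unitRoots] at hA
  obtain ⟨p, hpA, rfl⟩ := hC
  have hp : IsRegularPoint W p := fun v hv h ↦
    hpA (mem_biUnion (hA.superset (mem_image_of_mem mirror hv)) h)
  obtain ⟨S, hS⟩ := (finite_posRoots (W := W) (p := p)).exists_finset_coe
  have hpS : p ∈ openRegion ⊤ S := ⟨trivial, fun v hv ↦ (hS.subset hv).2⟩
  obtain rfl : A = S.image mirror := by
    rw [← Finset.coe_inj, hA, Finset.coe_image, hS, image_mirror_posRoots hp]
  have hinj : InjOn mirror (S : Set (E d)) := hS ▸ injOn_mirror_posRoots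
  obtain ⟨m, Hs, hHs, hgeneric⟩ :=
    exists_isHyperplane_forall_isGeneric (U := ⊤) (finite_unitRoots (W := W))
  refine ⟨m, Hs, hHs, fun x hx k hk ↦ ?_⟩
  have hsign : (-1 : ℤ) ^ (d + k) = (-1) ^ (d - k) := by
    rw [← Nat.sub_add_cancel hk, add_assoc, pow_add, ← two_mul, pow_mul]
    simp
  rw [closure_connectedComponentIn_eq_closedRegion hpS,
    ncard_projDimEq_eq_whitneySum hWrefl hp hS (hgeneric x hx), charCoeff_image_mirror hinj, hsign]
end
end
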